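/- (No-unilocal-broadcasting of mutual information) Let ρ_{AB} be a bipartite density matrix. There exists a quantum channel Γ: B → B₁B₂ such that ρ̃ = (id_A ⊗ Γ)[ρ_{AB}] satisfies I(A:B₁)_{ρ̃} = I(A:B₂)_{ρ̃} = I(A:B)_ρ if and only if ρ_{AB} is classical on B, i.e., ρ_{AB} = Σ_j p_j ρ_j^A ⊗ |b_j⟩⟨b_j| for some orthonormal basis {|b_j⟩} of H_B. -/

import Mathlib

open Matrix Kronecker ComplexOrder

section Defs
variable {α α' β β' γ : Type*} [Fintype α] [DecidableEq α] [Fintype α'] [DecidableEq α']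
  [Fintype β] [DecidableEq β] [Fintype β'] [DecidableEq β'] [Fintype γ] [DecidableEq γ]

/-- A density matrix: a positive semidefinite matrix with unit trace. -/
def IsDensityMatrix (ρ : Matrix β β ℂ) : Prop := ρ.PosSemidef ∧ ρ.trace = 1

/-- The map `id_α ⊗ Λ` induced on matrices over the product index type. -/
noncomputable def idTensor (Λ : Matrix β β ℂ →ₗ[ℂ] Matrix β' β' ℂ) :
    Matrix (α × β) (α × β) ℂ →ₗ[ℂ] Matrix (α × β') (α × β') ℂ where
  toFun M := Matrix.of fun p q => Λ (Matrix.of fun b b' => M (p.1, b) (q.1, b')) p.2 q.2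
  map_add' M N := by
    ext p q
    show Λ (Matrix.of fun b b' => (M + N) (p.1, b) (q.1, b')) p.2 q.2 = _
    have h : (Matrix.of fun b b' => (M + N) (p.1, b) (q.1, b')) =
        (Matrix.of fun b b' => M (p.1, b) (q.1, b')) +
          (Matrix.of fun b b' => N (p.1, b) (q.1, b')) := rfl
    rw [h, map_add]
    rfl
  map_smul' c M := by
    ext p q
    show Λ (Matrix.of fun b b' => (c • M) (p.1, b) (q.1, b')) p.2 q.2 = _
    have h : (Matrix.of fun b b' => (c • M) (p.1, b) (q.1, b')) =
        c • (Matrix.of fun b b' => M (p.1, b) (q.1, b')) := rfl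
    rw [h, _root_.map_smul]
    rfl

/-- Complete positivity: all extensions `id ⊗ Λ` preserve positive semidefiniteness. -/
def IsCompletelyPositive (Λ : Matrix β β ℂ →ₗ[ℂ] Matrix β' β' ℂ) : Prop :=
  ∀ (k : ℕ) (M : Matrix (Fin k × β) (Fin k × β) ℂ), M.PosSemidef → (idTensor Λ M).PosSemidef

/-- A quantum channel: a completely positive trace-preserving linear map. -/
def IsQuantumChannel (Λ : Matrix β β ℂ →ₗ[ℂ] Matrix β' β' ℂ) : Prop :=
  IsCompletelyPositive Λ ∧ ∀ X, (Λ X).trace = X.trace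

/-- Partial trace over the second tensor factor. -/
noncomputable def ptraceRight (M : Matrix (α × β) (α × β) ℂ) : Matrix α α ℂ :=
  Matrix.of fun a a' => ∑ b, M (a, b) (a', b)

/-- Partial trace over the first tensor factor. -/
noncomputable def ptraceLeft (M : Matrix (α × β) (α × β) ℂ) : Matrix β β ℂ :=
  Matrix.of fun b b' => ∑ a, M (a, b) (a, b')

/-- The von Neumann entropy `S(ρ) = -Tr(ρ log₂ ρ)`, computed via the eigenvalues
(with the convention `0 log 0 = 0`; junk value `0` for non-Hermitian input). -/
noncomputable def vnEntropy (ρ : Matrix β β ℂ) : ℝ :=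
  if h : ρ.IsHermitian then -∑ i, h.eigenvalues i * Real.logb 2 (h.eigenvalues i) else 0

/-- The mutual information `I(A:B) = S(A) + S(B) - S(AB)` of a bipartite state. -/
noncomputable def mutualInfo (ρ : Matrix (α × β) (α × β) ℂ) : ℝ :=
  vnEntropy (ptraceRight ρ) + vnEntropy (ptraceLeft ρ) - vnEntropy ρ

/-- Partial trace over the third tensor factor of a tripartite system. -/
noncomputable def ptraceThird (M : Matrix (α × β × γ) (α × β × γ) ℂ) :
    Matrix (α × β) (α × β) ℂ :=
  Matrix.of fun p q => ∑ c, M (p.1, p.2, c) (q.1, q.2, c)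

/-- Partial trace over the second tensor factor of a tripartite system. -/
noncomputable def ptraceSecond (M : Matrix (α × β × γ) (α × β × γ) ℂ) :
    Matrix (α × γ) (α × γ) ℂ :=
  Matrix.of fun p q => ∑ b, M (p.1, b, p.2) (q.1, b, q.2)

/-- A bipartite state is classical on `B` if it has the form
`∑ⱼ pⱼ ρⱼ^A ⊗ |bⱼ⟩⟨bⱼ|` for an orthonormal basis `{|bⱼ⟩}` of `H_B`. -/
def ClassicalOnB (ρ : Matrix (α × β) (α × β) ℂ) : Prop :=
  ∃ (p : β → ℝ) (τ : β → Matrix α α ℂ) (bv : β → β → ℂ),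
    (∀ j, 0 ≤ p j) ∧ (∑ j, p j = 1) ∧ (∀ j, IsDensityMatrix (τ j)) ∧
    (∀ j j', star (bv j) ⬝ᵥ bv j' = if j = j' then 1 else 0) ∧
    ρ = ∑ j, (p j : ℂ) • (τ j ⊗ₖ vecMulVec (bv j) (star (bv j)))

end Defs

/-!
Preserving the mutual information under either marginal of `Γ` is equality in the data processing
inequality for `D(ρ_AB ‖ 1 ⊗ ρ_B)`. Expanding the relative entropy in the resolvents of the relative
modular operator, each of which is separately monotone, equality forces `ρ_AB` and `ρ_AB²`, each
multiplied by `1 ⊗ ρ_B⁻¹`, to be implemented at the output of the Kraus operators of that marginal.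
Hence so are their blocks, the operators on `B` obtained by fixing the matrix indices of `A`.
An operator implemented on `B₁` and one implemented on `B₂` commute, which yields
`X ρ_B⁻¹ Y = Y ρ_B⁻¹ X` for all blocks `X`, `Y` of `ρ_AB` and a similar identity for `ρ_AB²`.
A trace argument then shows that the blocks commute with `ρ_B⁻¹`, hence with one another. They are
therefore diagonal in a common orthonormal basis of `B`, which is classicality on `B`. Conversely,
a state classical in a basis `bⱼ` is broadcast by `|bⱼ⟩ ↦ |bⱼ⟩ ⊗ |bⱼ⟩` after a measurement.
-/

section Positivity

variable {m n κ : Type*} [Fintype m] [Fintype n] [Fintype κ]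

lemma re_trace_conj_nonneg {τ : Matrix n n ℂ} (hτ : τ.PosSemidef) (L : Matrix m n ℂ) :
    0 ≤ (L * τ * Lᴴ).trace.re :=
  (Complex.nonneg_iff.mp (hτ.mul_mul_conjTranspose_same L).trace_nonneg).1

lemma ofReal_re_trace {τ : Matrix n n ℂ} (hτ : τ.PosSemidef) : (τ.trace.re : ℂ) = τ.trace :=
  (Complex.eq_re_of_ofReal_le (r := 0) (by simpa using hτ.trace_nonneg)).symm

lemma mul_eq_zero_of_re_trace_conj_eq_zero {τ : Matrix n n ℂ} (hτ : τ.PosSemidef)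
    {L : Matrix m n ℂ} (h : (L * τ * Lᴴ).trace.re = 0) : L * τ = 0 := by
  classical
  have hL := hτ.mul_mul_conjTranspose_same L
  have hzero : L * τ * Lᴴ = 0 := by
    rw [← hL.trace_eq_zero_iff, ← ofReal_re_trace hL, h, Complex.ofReal_zero]
  open scoped MatrixOrder in
  obtain ⟨B, hB⟩ := CStarAlgebra.nonneg_iff_eq_star_mul_self.mp hτ.nonneg
  rw [star_eq_conjTranspose] at hB
  have hLB : L * Bᴴ = 0 := by
    rwa [← self_mul_conjTranspose_eq_zero, conjTranspose_mul, conjTranspose_conjTranspose,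
      ← Matrix.mul_assoc, Matrix.mul_assoc L, ← hB]
  rw [hB, ← Matrix.mul_assoc, hLB, Matrix.zero_mul]

lemma mul_eq_zero_of_sum_re_trace_conj_eq_zero {τ : Matrix n n ℂ} (hτ : τ.PosSemidef)
    {L : κ → Matrix m n ℂ} (h : (∑ e, (L e * τ * (L e)ᴴ).trace).re = 0) (e : κ) :
    L e * τ = 0 := by
  rw [Complex.re_sum, Finset.sum_eq_zero_iff_of_nonneg
    fun e _ => re_trace_conj_nonneg hτ (L e)] at h
  exact mul_eq_zero_of_re_trace_conj_eq_zero hτ (h e (Finset.mem_univ e))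

lemma re_trace_conjTranspose (A : Matrix n n ℂ) : Aᴴ.trace.re = A.trace.re := by
  rw [trace_conjTranspose, Complex.star_def, Complex.conj_re]

end Positivity

section KrausMap

variable {m n κ : Type*} [Fintype n] [Fintype κ]

/-- The completely positive map `M ↦ ∑ₑ Kₑ M Kₑ*` with Kraus operators `Kₑ`. -/
noncomputable def krausMap (K : κ → Matrix m n ℂ) : Matrix n n ℂ →ₗ[ℂ] Matrix m m ℂ where
  toFun M := ∑ e, K e * M * (K e)ᴴ
  map_add' M N := by simp only [Matrix.mul_add, Matrix.add_mul, Finset.sum_add_distrib]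
  map_smul' c M := by
    simp only [Matrix.mul_smul, Matrix.smul_mul, Finset.smul_sum, RingHom.id_apply]

lemma krausMap_apply (K : κ → Matrix m n ℂ) (M : Matrix n n ℂ) :
    krausMap K M = ∑ e, K e * M * (K e)ᴴ := rfl

lemma posSemidef_krausMap (K : κ → Matrix m n ℂ) [Finite m] {M : Matrix n n ℂ}
    (hM : M.PosSemidef) : (krausMap K M).PosSemidef :=
  posSemidef_sum _ fun e _ => hM.mul_mul_conjTranspose_same (K e)

lemma conjTranspose_krausMap (K : κ → Matrix m n ℂ) (M : Matrix n n ℂ) :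
    krausMap K Mᴴ = (krausMap K M)ᴴ := by
  simp only [krausMap_apply, conjTranspose_sum, conjTranspose_mul, conjTranspose_conjTranspose,
    Matrix.mul_assoc]

variable [Fintype m]

lemma mul_krausMap_mul {A : Matrix m m ℂ} {B σ : Matrix n n ℂ} {K : κ → Matrix m n ℂ}
    (h : ∀ e, A * K e * σ = K e * B) (M : Matrix n n ℂ) :
    A * krausMap K (σ * M) = krausMap K (B * M) := by
  simp only [krausMap_apply, Finset.mul_sum, ← Matrix.mul_assoc, h]

lemma trace_krausMap (K : κ → Matrix m n ℂ) (M : Matrix n n ℂ) :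
    (krausMap K M).trace = ((∑ e, (K e)ᴴ * K e) * M).trace := by
  simp only [krausMap_apply, Finset.sum_mul, trace_sum]
  exact Finset.sum_congr rfl fun e _ => by rw [trace_mul_comm, Matrix.mul_assoc]

variable [DecidableEq n] {K : κ → Matrix m n ℂ} (hK : ∑ e, (K e)ᴴ * K e = 1)
include hK

lemma trace_krausMap_of_sum_eq_one (M : Matrix n n ℂ) : (krausMap K M).trace = M.trace := by
  rw [trace_krausMap, hK, Matrix.one_mul]

lemma sum_trace_conj_commutator (A : Matrix m m ℂ) (B τ : Matrix n n ℂ) :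
    ∑ e, ((A * K e - K e * B) * τ * (A * K e - K e * B)ᴴ).trace =
      (A * krausMap K τ * Aᴴ).trace - (A * krausMap K (τ * Bᴴ)).trace
        - (krausMap K (B * τ) * Aᴴ).trace + (B * τ * Bᴴ).trace := by
  rw [← trace_krausMap_of_sum_eq_one hK (B * τ * Bᴴ)]
  simp only [krausMap_apply, Finset.mul_sum, Finset.sum_mul, trace_sum, ← Finset.sum_sub_distrib,
    ← Finset.sum_add_distrib, ← trace_sub, ← trace_add]
  refine Finset.sum_congr rfl fun e _ => congrArg trace ?_
  simp only [conjTranspose_sub, conjTranspose_mul, Matrix.mul_sub, Matrix.sub_mul,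
    Matrix.mul_assoc]
  abel

/-- The data processing inequality for the resolvents of the relative modular operator, with its
defect, a sum of nonnegative terms when `σ`, `ρ` and `s` are nonnegative. -/
lemma sum_trace_sylvester_defect {σ ρ X : Matrix n n ℂ} {Y : Matrix m m ℂ}
    (hσ : σ.IsHermitian) (hρ : ρ.IsHermitian) {s : ℝ} (hX : σ * X + s • (X * ρ) = ρ)
    (hY : krausMap K σ * Y + s • (Y * krausMap K ρ) = krausMap K ρ) :
    ∑ e, ((Yᴴ * K e - K e * Xᴴ) * σ * (Yᴴ * K e - K e * Xᴴ)ᴴ).trace +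
        s • ∑ e, ((Y * K e - K e * X) * ρ * (Y * K e - K e * X)ᴴ).trace =
      (Xᴴ * ρ).trace - (krausMap K ρ * Y).trace := by
  have hX' : Xᴴ * σ + s • (ρ * Xᴴ) = ρ := by
    simpa [hσ.eq, hρ.eq] using congrArg conjTranspose hX
  have hout : (Yᴴ * krausMap K σ * Y).trace + s • (Y * krausMap K ρ * Yᴴ).trace =
      (Yᴴ * krausMap K ρ).trace := by
    rw [trace_mul_comm (Y * krausMap K ρ), Matrix.mul_assoc, ← trace_smul, ← trace_add,
      ← Matrix.mul_smul, ← Matrix.mul_add, hY]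
  have hin : (Xᴴ * σ * X).trace + s • (X * ρ * Xᴴ).trace = (Xᴴ * ρ).trace := by
    rw [trace_mul_comm (X * ρ), Matrix.mul_assoc, ← trace_smul, ← trace_add,
      ← Matrix.mul_smul, ← Matrix.mul_add, hX]
  have hleft : (Yᴴ * krausMap K (σ * X)).trace + s • (krausMap K (X * ρ) * Yᴴ).trace =
      (Yᴴ * krausMap K ρ).trace := by
    rw [trace_mul_comm (krausMap K (X * ρ)), ← trace_smul, ← trace_add, ← Matrix.mul_smul,
      ← Matrix.mul_add, ← LinearMap.map_smul_of_tower, ← map_add, hX]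
  have hright : (krausMap K (Xᴴ * σ) * Y).trace + s • (Y * krausMap K (ρ * Xᴴ)).trace =
      (krausMap K ρ * Y).trace := by
    rw [trace_mul_comm Y, ← trace_smul, ← trace_add, ← Matrix.smul_mul, ← Matrix.add_mul,
      ← LinearMap.map_smul_of_tower, ← map_add, hX']
  rw [sum_trace_conj_commutator hK, sum_trace_conj_commutator hK]
  simp only [conjTranspose_conjTranspose, smul_add, smul_sub]
  linear_combination hout + hin - hleft - hright

end KrausMap

section DoubleOperatorSum

variable {n : Type*} [Fintype n] [DecidableEq n] {σ ρ : Matrix n n ℂ}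

/-- The unitary matrix of inner products `⟨σ-eigenvector, ρ-eigenvector⟩`. -/
noncomputable def eigenOverlap (hσ : σ.IsHermitian) (hρ : ρ.IsHermitian) : Matrix n n ℂ :=
  (hσ.eigenvectorUnitary : Matrix n n ℂ)ᴴ * (hρ.eigenvectorUnitary : Matrix n n ℂ)

/-- The double operator sum `∑ⱼᵢ f(qⱼ, pᵢ) Qⱼ Pᵢ`, where `σ = ∑ⱼ qⱼ Qⱼ` and `ρ = ∑ᵢ pᵢ Pᵢ` are
spectral decompositions: `f` applied to left multiplication by `σ` and right multiplication
by `ρ`. -/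
noncomputable def doubleOperatorSum (hσ : σ.IsHermitian) (hρ : ρ.IsHermitian) (f : ℝ → ℝ → ℝ) :
    Matrix n n ℂ :=
  hσ.eigenvectorUnitary *
    of (fun j i => (f (hσ.eigenvalues j) (hρ.eigenvalues i) : ℂ) * eigenOverlap hσ hρ j i) *
    (hρ.eigenvectorUnitary : Matrix n n ℂ)ᴴ

lemma cfc_eq_mul_diagonal_mul (hσ : σ.IsHermitian) (g : ℝ → ℝ) :
    cfc g σ = (hσ.eigenvectorUnitary : Matrix n n ℂ) *
      diagonal (fun j => (g (hσ.eigenvalues j) : ℂ)) * (hσ.eigenvectorUnitary : Matrix n n ℂ)ᴴ := by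
  rw [hσ.cfc_eq, IsHermitian.cfc, Unitary.conjStarAlgAut_apply]
  rfl

lemma conjTranspose_eigenvectorUnitary_mul_self (hσ : σ.IsHermitian) :
    (hσ.eigenvectorUnitary : Matrix n n ℂ)ᴴ * hσ.eigenvectorUnitary = 1 :=
  Unitary.coe_star_mul_self hσ.eigenvectorUnitary

lemma eigenvectorUnitary_mul_conjTranspose_self (hσ : σ.IsHermitian) :
    hσ.eigenvectorUnitary * (hσ.eigenvectorUnitary : Matrix n n ℂ)ᴴ = 1 :=
  Unitary.coe_mul_star_self hσ.eigenvectorUnitary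

variable (hσ : σ.IsHermitian) (hρ : ρ.IsHermitian)

lemma doubleOperatorSum_congr {f g : ℝ → ℝ → ℝ}
    (h : ∀ j i, f (hσ.eigenvalues j) (hρ.eigenvalues i) =
      g (hσ.eigenvalues j) (hρ.eigenvalues i)) :
    doubleOperatorSum hσ hρ f = doubleOperatorSum hσ hρ g := by
  simp only [doubleOperatorSum, h]

lemma doubleOperatorSum_add (f g : ℝ → ℝ → ℝ) :
    doubleOperatorSum hσ hρ (fun q p => f q p + g q p) =
      doubleOperatorSum hσ hρ f + doubleOperatorSum hσ hρ g := by
  simp only [doubleOperatorSum, ← Matrix.mul_add, ← Matrix.add_mul]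
  congr 2
  ext j i
  simp [add_mul]

lemma doubleOperatorSum_smul (s : ℝ) (f : ℝ → ℝ → ℝ) :
    doubleOperatorSum hσ hρ (fun q p => s * f q p) = s • doubleOperatorSum hσ hρ f := by
  rw [doubleOperatorSum, doubleOperatorSum, ← Matrix.smul_mul, ← Matrix.mul_smul]
  congr 2
  ext j i
  simp [mul_assoc]

lemma doubleOperatorSum_one : doubleOperatorSum hσ hρ (fun _ _ => 1) = 1 := by
  have hof : of (fun j i => ((1 : ℝ) : ℂ) * eigenOverlap hσ hρ j i) = eigenOverlap hσ hρ := by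
    ext j i
    simp
  rw [doubleOperatorSum, hof, eigenOverlap, ← Matrix.mul_assoc,
    eigenvectorUnitary_mul_conjTranspose_self, Matrix.one_mul,
    eigenvectorUnitary_mul_conjTranspose_self]

lemma cfc_mul_doubleOperatorSum (g : ℝ → ℝ) (f : ℝ → ℝ → ℝ) :
    cfc g σ * doubleOperatorSum hσ hρ f = doubleOperatorSum hσ hρ (fun q p => g q * f q p) := by
  set U := (hσ.eigenvectorUnitary : Matrix n n ℂ) with hU
  have hdiag (W M : Matrix n n ℂ) (d : n → ℂ) :
      U * diagonal d * Uᴴ * (U * M * W) = U * (diagonal d * M) * W := by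
    rw [← Matrix.mul_assoc, ← Matrix.mul_assoc, Matrix.mul_assoc (U * diagonal d), hU,
      conjTranspose_eigenvectorUnitary_mul_self, Matrix.mul_one, Matrix.mul_assoc _ _ M]
  rw [cfc_eq_mul_diagonal_mul hσ, doubleOperatorSum, doubleOperatorSum, hdiag]
  congr 2
  ext j i
  simp [diagonal_mul, mul_assoc]

lemma doubleOperatorSum_mul_cfc (f : ℝ → ℝ → ℝ) (g : ℝ → ℝ) :
    doubleOperatorSum hσ hρ f * cfc g ρ = doubleOperatorSum hσ hρ (fun q p => f q p * g p) := by
  set U := (hρ.eigenvectorUnitary : Matrix n n ℂ) with hU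
  have hdiag (W M : Matrix n n ℂ) (d : n → ℂ) :
      W * M * Uᴴ * (U * diagonal d * Uᴴ) = W * (M * diagonal d) * Uᴴ := by
    rw [← Matrix.mul_assoc, ← Matrix.mul_assoc, Matrix.mul_assoc (W * M), hU,
      conjTranspose_eigenvectorUnitary_mul_self, Matrix.mul_one, Matrix.mul_assoc W]
  rw [cfc_eq_mul_diagonal_mul hρ, doubleOperatorSum, doubleOperatorSum, hdiag]
  congr 2
  ext j i
  simp [mul_diagonal, mul_right_comm]

lemma re_trace_doubleOperatorSum (f : ℝ → ℝ → ℝ) :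
    (doubleOperatorSum hσ hρ f).trace.re =
      ∑ x : n × n, f (hσ.eigenvalues x.1) (hρ.eigenvalues x.2) *
        Complex.normSq (eigenOverlap hσ hρ x.1 x.2) := by
  have hoverlap : (hρ.eigenvectorUnitary : Matrix n n ℂ)ᴴ * hσ.eigenvectorUnitary =
      (eigenOverlap hσ hρ)ᴴ := by
    rw [eigenOverlap, conjTranspose_mul, conjTranspose_conjTranspose]
  rw [doubleOperatorSum, trace_mul_cycle, hoverlap, trace_mul_comm]
  simp only [Matrix.trace, diag_apply, Matrix.mul_apply, Complex.re_sum, of_apply,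
    conjTranspose_apply, mul_assoc, Complex.star_def, Complex.mul_conj, Complex.re_ofReal_mul,
    Complex.ofReal_re, Fintype.sum_prod_type]

end DoubleOperatorSum

section LogarithmicPotential

open Filter Topology Set

variable {ι : Type*} [Fintype ι] {u t : ι → ℝ}

/-- The logarithmic potential `s ↦ ∑ᵢ uᵢ log (tᵢ + s)` of point charges `uᵢ` at `-tᵢ`. -/
noncomputable def logPotential (u t : ι → ℝ) (s : ℝ) : ℝ := ∑ i, u i * Real.log (t i + s)

lemma tendsto_logPotential_atTop (hu : ∑ i, u i = 0) :
    Tendsto (logPotential u t) atTop (𝓝 0) := by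
  have hsub : logPotential u t = fun s => ∑ i, u i * (Real.log (s + t i) - Real.log s) := by
    funext s
    simp only [logPotential, mul_sub, Finset.sum_sub_distrib, ← Finset.sum_mul, hu, zero_mul,
      sub_zero, add_comm s]
  rw [hsub]
  simpa using tendsto_finsetSum Finset.univ fun i _ =>
    (Real.tendsto_log_comp_add_sub_log (t i)).const_mul (u i)

variable (ht : ∀ i, u i ≠ 0 → 0 < t i)
include ht

lemma hasDerivAt_logPotential {s : ℝ} (hs : 0 ≤ s) :
    HasDerivAt (logPotential u t) (∑ i, u i / (t i + s)) s := by
  refine HasDerivAt.fun_sum fun i _ => ?_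
  rcases eq_or_ne (u i) 0 with hi | hi
  · simpa [hi] using hasDerivAt_const s (0 : ℝ)
  · have hlog := ((hasDerivAt_id' s).const_add (t i)).log
      (add_pos_of_pos_of_nonneg (ht i hi) hs).ne'
    simpa [div_eq_mul_inv] using hlog.const_mul (u i)

lemma hasDerivAt_sum_div_add {s : ℝ} (hs : 0 ≤ s) :
    HasDerivAt (fun s => ∑ i, u i / (t i + s)) (-∑ i, u i / (t i + s) ^ 2) s := by
  rw [← Finset.sum_neg_distrib]
  refine HasDerivAt.fun_sum fun i _ => ?_
  rcases eq_or_ne (u i) 0 with hi | hi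
  · simpa [hi] using hasDerivAt_const s (0 : ℝ)
  · have hinv := ((hasDerivAt_id' s).const_add (t i)).inv
      (add_pos_of_pos_of_nonneg (ht i hi) hs).ne'
    simpa [div_eq_mul_inv] using hinv.const_mul (u i)

lemma logPotential_eq_zero (hu : ∑ i, u i = 0) (hlog : ∑ i, u i * Real.log (t i) = 0)
    (hpos : ∀ s, 0 < s → 0 ≤ ∑ i, u i / (t i + s)) {s : ℝ} (hs : 0 ≤ s) :
    logPotential u t s = 0 := by
  have hmono : MonotoneOn (logPotential u t) (Ici 0) := by
    refine monotoneOn_of_hasDerivWithinAt_nonneg (convex_Ici 0)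
      (fun s hs => (hasDerivAt_logPotential ht hs).continuousAt.continuousWithinAt)
      (fun s hs => (hasDerivAt_logPotential ht (interior_subset hs)).hasDerivWithinAt)
      fun s hs => hpos s ?_
    rwa [interior_Ici] at hs
  have hzero : logPotential u t 0 = 0 := by simpa [logPotential] using hlog
  refine le_antisymm ?_ (hzero ▸ hmono self_mem_Ici hs hs)
  exact ge_of_tendsto (tendsto_logPotential_atTop hu) <| (eventually_ge_atTop s).mono
    fun r hr => hmono hs (hs.trans hr) hr

/-- The logarithmic potential of the charges `uᵢ` is monotone, vanishes at `0` and tends to `0` at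
infinity. -/
lemma inverse_moments_eq_zero (hu : ∑ i, u i = 0) (hlog : ∑ i, u i * Real.log (t i) = 0)
    (hpos : ∀ s, 0 < s → 0 ≤ ∑ i, u i / (t i + s)) :
    ∑ i, u i / t i = 0 ∧ ∑ i, u i / t i ^ 2 = 0 := by
  have hfirst : ∀ s, 0 ≤ s → ∑ i, u i / (t i + s) = 0 := fun s hs =>
    (uniqueDiffOn_Ici 0 s hs).eq_deriv _ (hasDerivAt_logPotential ht hs).hasDerivWithinAt
      ((hasDerivWithinAt_const s _ 0).congr
        (fun r hr => logPotential_eq_zero ht hu hlog hpos hr)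
        (logPotential_eq_zero ht hu hlog hpos hs))
  have hsecond : -∑ i, u i / (t i + 0) ^ 2 = 0 :=
    (uniqueDiffOn_Ici 0 0 self_mem_Ici).eq_deriv _
      (hasDerivAt_sum_div_add ht le_rfl).hasDerivWithinAt
      ((hasDerivWithinAt_const 0 _ 0).congr hfirst (hfirst 0 le_rfl))
  exact ⟨by simpa using hfirst 0 le_rfl, by simpa using hsecond⟩

end LogarithmicPotential

section PseudoInverse

variable {n : Type*} [Fintype n] [DecidableEq n] {σ : Matrix n n ℂ}

lemma continuousOn_real_spectrum (f : ℝ → ℝ) (A : Matrix n n ℂ) : ContinuousOn f (spectrum ℝ A) :=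
  A.finite_real_spectrum.continuousOn f

lemma cfc_mul_cfc (f g : ℝ → ℝ) (A : Matrix n n ℂ) :
    cfc f A * cfc g A = cfc (fun x => f x * g x) A :=
  (cfc_mul f g A (continuousOn_real_spectrum f A) (continuousOn_real_spectrum g A)).symm

lemma self_mul_cfc (hσ : σ.IsHermitian) (f : ℝ → ℝ) :
    σ * cfc f σ = cfc (fun x => x * f x) σ := by
  have h := cfc_mul_cfc (fun x => x) f σ
  rwa [cfc_id' ℝ σ hσ.isSelfAdjoint] at h

lemma cfc_mul_self (hσ : σ.IsHermitian) (f : ℝ → ℝ) :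
    cfc f σ * σ = cfc (fun x => f x * x) σ := by
  have h := cfc_mul_cfc f (fun x => x) σ
  rwa [cfc_id' ℝ σ hσ.isSelfAdjoint] at h

/-- The Moore–Penrose pseudo-inverse of a Hermitian matrix: since `0⁻¹ = 0`, applying the inverse
to the eigenvalues inverts `σ` on its support only. -/
noncomputable def pinv (σ : Matrix n n ℂ) : Matrix n n ℂ := cfc (fun x : ℝ => x⁻¹) σ

lemma isHermitian_pinv (σ : Matrix n n ℂ) : (pinv σ).IsHermitian := cfc_predicate _ σ

lemma commute_pinv (σ : Matrix n n ℂ) : Commute (pinv σ) σ := (Commute.refl σ).cfc_real _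

lemma self_mul_pinv_mul_self (hσ : σ.IsHermitian) : σ * pinv σ * σ = σ := by
  rw [pinv, self_mul_cfc hσ, cfc_mul_self hσ]
  simp only [mul_inv_mul_cancel, cfc_id' ℝ σ hσ.isSelfAdjoint]

lemma pinv_mul_self_mul_pinv (hσ : σ.IsHermitian) : pinv σ * σ * pinv σ = pinv σ := by
  rw [pinv, cfc_mul_self hσ, cfc_mul_cfc]
  exact congrArg (cfc · σ) (funext fun x => by simpa using mul_inv_mul_cancel x⁻¹)

lemma posSemidef_pinv (hσ : σ.PosSemidef) : (pinv σ).PosSemidef := by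
  have h := hσ.conjTranspose_mul_mul_same (pinv σ)
  rwa [(isHermitian_pinv σ).eq, pinv_mul_self_mul_pinv hσ.1] at h

end PseudoInverse

section RelativeModularSpectrum

variable {n : Type*} [Fintype n] [DecidableEq n] {σ ρ : Matrix n n ℂ}

/-- Umegaki's relative entropy `D(ρ‖σ) = tr ρ (log ρ - log σ)`, in nats. Since `Real.log 0 = 0`,
it has this meaning only if the support of `ρ` is contained in that of `σ`. -/
noncomputable def relEntropy (ρ σ : Matrix n n ℂ) : ℝ :=
  (ρ * (cfc Real.log ρ - cfc Real.log σ)).trace.re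

/-- The support of `ρ` is contained in the support of `σ`. -/
def SupportLE (ρ σ : Matrix n n ℂ) : Prop := σ * pinv σ * ρ = ρ

/-- The eigenvalue `qⱼ / pᵢ` of the relative modular operator `M ↦ σ M ρ⁻¹`. -/
noncomputable def modularRatio (hσ : σ.IsHermitian) (hρ : ρ.IsHermitian) (x : n × n) : ℝ :=
  hσ.eigenvalues x.1 / hρ.eigenvalues x.2

/-- The weight `pᵢ |⟨vⱼ, uᵢ⟩|²` which the vector `ρ^(1/2)` gives to the eigenvalue `qⱼ / pᵢ` of the
relative modular operator. -/
noncomputable def modularWeight (hσ : σ.IsHermitian) (hρ : ρ.IsHermitian) (x : n × n) : ℝ :=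
  hρ.eigenvalues x.2 * Complex.normSq (eigenOverlap hσ hρ x.1 x.2)

lemma doubleOperatorSum_right_eq_self (hσ : σ.IsHermitian) (hρ : ρ.IsHermitian) :
    (doubleOperatorSum hσ hρ fun _ p => p) = ρ := by
  have h := doubleOperatorSum_mul_cfc hσ hρ (fun _ _ => 1) (fun p => p)
  simpa only [doubleOperatorSum_one, Matrix.one_mul, one_mul, cfc_id' ℝ ρ hρ.isSelfAdjoint]
    using h.symm

lemma cfc_mul_eq_doubleOperatorSum (hσ : σ.IsHermitian) (hρ : ρ.IsHermitian) (g : ℝ → ℝ) :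
    cfc g σ * ρ = doubleOperatorSum hσ hρ fun q p => g q * p := by
  rw [← cfc_mul_doubleOperatorSum, doubleOperatorSum_right_eq_self]

lemma doubleOperatorSum_mul_self (hσ : σ.IsHermitian) (hρ : ρ.IsHermitian) (f : ℝ → ℝ → ℝ) :
    doubleOperatorSum hσ hρ f * ρ = doubleOperatorSum hσ hρ fun q p => f q p * p := by
  rw [← doubleOperatorSum_mul_cfc, cfc_id' ℝ ρ hρ.isSelfAdjoint]

lemma self_mul_doubleOperatorSum (hσ : σ.IsHermitian) (hρ : ρ.IsHermitian) (f : ℝ → ℝ → ℝ) :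
    σ * doubleOperatorSum hσ hρ f = doubleOperatorSum hσ hρ fun q p => q * f q p := by
  rw [← cfc_mul_doubleOperatorSum, cfc_id' ℝ σ hσ.isSelfAdjoint]

lemma re_trace_eq_sum_modularWeight (hσ : σ.IsHermitian) (hρ : ρ.IsHermitian) :
    ρ.trace.re = ∑ x, modularWeight hσ hρ x := by
  have h := re_trace_doubleOperatorSum hσ hρ fun _ p => p
  rwa [doubleOperatorSum_right_eq_self] at h

lemma modularRatio_pos (hσ : σ.PosSemidef) (hρ : ρ.PosSemidef) (hsupp : SupportLE ρ σ)
    {x : n × n} (hx : modularWeight hσ.1 hρ.1 x ≠ 0) : 0 < modularRatio hσ.1 hρ.1 x := by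
  have hweight : ∀ y, 0 ≤ modularWeight hσ.1 hρ.1 y := fun y =>
    mul_nonneg (hρ.eigenvalues_nonneg y.2) (Complex.normSq_nonneg _)
  have hsum : ∑ y, hσ.1.eigenvalues y.1 * (hσ.1.eigenvalues y.1)⁻¹ * modularWeight hσ.1 hρ.1 y =
      ∑ y, modularWeight hσ.1 hρ.1 y := by
    have h := congrArg (fun M : Matrix n n ℂ => M.trace.re) hsupp
    simp only [pinv, self_mul_cfc hσ.1, cfc_mul_eq_doubleOperatorSum hσ.1 hρ.1] at h
    rw [re_trace_eq_sum_modularWeight hσ.1 hρ.1, re_trace_doubleOperatorSum] at h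
    simpa only [modularWeight, mul_assoc] using h
  have hq : hσ.1.eigenvalues x.1 ≠ 0 := fun hq => hx <| by
    have h := (Finset.sum_eq_sum_iff_of_le fun y _ =>
      mul_le_of_le_one_left (hweight y) mul_inv_le_one).mp hsum x (Finset.mem_univ x)
    rw [← h, hq, zero_mul, zero_mul]
  exact div_pos ((hσ.eigenvalues_nonneg _).lt_of_ne' hq)
    ((hρ.eigenvalues_nonneg _).lt_of_ne' (left_ne_zero_of_mul hx))

lemma re_trace_doubleOperatorSum_eq_sum_modularWeight (hσ : σ.PosSemidef) (hρ : ρ.PosSemidef)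
    (hsupp : SupportLE ρ σ) {f : ℝ → ℝ → ℝ} {g : ℝ → ℝ} (hf0 : ∀ q, f q 0 = 0)
    (hf : ∀ q p, 0 < q → 0 < p → f q p = p * g (q / p)) :
    (doubleOperatorSum hσ.1 hρ.1 f).trace.re =
      ∑ x, modularWeight hσ.1 hρ.1 x * g (modularRatio hσ.1 hρ.1 x) := by
  rw [re_trace_doubleOperatorSum]
  refine Finset.sum_congr rfl fun x _ => ?_
  rcases eq_or_ne (modularWeight hσ.1 hρ.1 x) 0 with hx | hx
  · rw [hx, zero_mul]
    rcases mul_eq_zero.mp hx with hp | hoverlap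
    · rw [hp, hf0, zero_mul]
    · rw [hoverlap, mul_zero]
  · have hp := (hρ.eigenvalues_nonneg x.2).lt_of_ne' (left_ne_zero_of_mul hx)
    have hq := (div_pos_iff_of_pos_right hp).mp (modularRatio_pos hσ hρ hsupp hx)
    rw [hf _ _ hq hp, modularWeight, modularRatio]
    ring

/-- The solution `X` of the Sylvester equation `σX + sXρ = ρ`. -/
noncomputable def sylvesterSolution (hσ : σ.IsHermitian) (hρ : ρ.IsHermitian) (s : ℝ) :
    Matrix n n ℂ :=
  doubleOperatorSum hσ hρ fun q p => p / (q + s * p)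

lemma sylvesterSolution_spec (hσ : σ.PosSemidef) (hρ : ρ.PosSemidef) {s : ℝ} (hs : 0 < s) :
    σ * sylvesterSolution hσ.1 hρ.1 s + s • (sylvesterSolution hσ.1 hρ.1 s * ρ) = ρ := by
  rw [sylvesterSolution, self_mul_doubleOperatorSum, doubleOperatorSum_mul_self,
    ← doubleOperatorSum_smul, ← doubleOperatorSum_add]
  refine (doubleOperatorSum_congr _ _ fun j i => ?_).trans
    (doubleOperatorSum_right_eq_self hσ.1 hρ.1)
  have hq := hσ.eigenvalues_nonneg j
  rcases (hρ.eigenvalues_nonneg i).eq_or_lt with hp | hp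
  · simp [← hp]
  · field_simp

section Moments

variable (hσ : σ.PosSemidef) (hρ : ρ.PosSemidef) (hsupp : SupportLE ρ σ)
include hsupp

lemma re_trace_mul_sylvesterSolution {s : ℝ} (hs : 0 < s) :
    (ρ * sylvesterSolution hσ.1 hρ.1 s).trace.re =
      ∑ x, modularWeight hσ.1 hρ.1 x / (modularRatio hσ.1 hρ.1 x + s) := by
  simp only [div_eq_mul_inv (modularWeight _ _ _)]
  rw [trace_mul_comm, sylvesterSolution, doubleOperatorSum_mul_self,
    re_trace_doubleOperatorSum_eq_sum_modularWeight hσ hρ hsupp (g := fun t => (t + s)⁻¹) (by simp)]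
  intro q p hq hp
  field_simp

lemma re_trace_mul_pinv_mul :
    (ρ * pinv σ * ρ).trace.re =
      ∑ x, modularWeight hσ.1 hρ.1 x / modularRatio hσ.1 hρ.1 x := by
  simp only [div_eq_mul_inv (modularWeight _ _ _)]
  rw [trace_mul_cycle, trace_mul_comm, ← Matrix.mul_assoc, pinv,
    cfc_mul_eq_doubleOperatorSum hσ.1 hρ.1, doubleOperatorSum_mul_self,
    re_trace_doubleOperatorSum_eq_sum_modularWeight hσ hρ hsupp (g := fun t => t⁻¹) (by simp)]
  intro q p hq hp
  field_simp

lemma re_trace_pinv_mul_cube_mul_pinv :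
    (pinv σ * ρ * ρ * (ρ * pinv σ)).trace.re =
      ∑ x, modularWeight hσ.1 hρ.1 x / modularRatio hσ.1 hρ.1 x ^ 2 := by
  simp only [div_eq_mul_inv (modularWeight _ _ _)]
  rw [← Matrix.mul_assoc, trace_mul_comm, ← Matrix.mul_assoc, ← Matrix.mul_assoc,
    ← Matrix.mul_assoc, pinv, cfc_mul_cfc, cfc_mul_eq_doubleOperatorSum hσ.1 hρ.1,
    doubleOperatorSum_mul_self, doubleOperatorSum_mul_self,
    re_trace_doubleOperatorSum_eq_sum_modularWeight hσ hρ hsupp (g := fun t => (t ^ 2)⁻¹) (by simp)]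
  intro q p hq hp
  field_simp

lemma relEntropy_eq_neg_sum_modularWeight :
    relEntropy ρ σ =
      -∑ x, modularWeight hσ.1 hρ.1 x * Real.log (modularRatio hσ.1 hρ.1 x) := by
  have hlog : ρ * cfc Real.log ρ = doubleOperatorSum hσ.1 hρ.1 fun _ p => p * Real.log p := by
    rw [← doubleOperatorSum_mul_cfc, doubleOperatorSum_right_eq_self]
  rw [relEntropy, sub_eq_add_neg, ← cfc_neg, Matrix.mul_add, trace_add, trace_mul_comm _ (cfc _ σ),
    hlog, cfc_mul_eq_doubleOperatorSum hσ.1 hρ.1, ← trace_add, ← doubleOperatorSum_add,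
    re_trace_doubleOperatorSum_eq_sum_modularWeight hσ hρ hsupp (g := fun t => -Real.log t)
      (by simp), ← Finset.sum_neg_distrib]
  · simp only [mul_neg]
  · intro q p hq hp
    rw [Real.log_div hq.ne' hp.ne']
    ring

end Moments

end RelativeModularSpectrum

section Sufficiency

variable {m n κ : Type*} [Fintype m] [DecidableEq m] [Fintype n] [DecidableEq n] [Fintype κ]
  {σ ρ : Matrix n n ℂ} {K : κ → Matrix m n ℂ}

lemma supportLE_iff : SupportLE ρ σ ↔ (1 - σ * pinv σ) * ρ = 0 := by
  rw [SupportLE, Matrix.sub_mul, Matrix.one_mul, sub_eq_zero, eq_comm]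

lemma supportLE_krausMap (hσ : σ.PosSemidef) (hsupp : SupportLE ρ σ) (K : κ → Matrix m n ℂ) :
    SupportLE (krausMap K ρ) (krausMap K σ) := by
  have hσ₁ := posSemidef_krausMap K hσ
  rw [supportLE_iff]
  set Q := 1 - krausMap K σ * pinv (krausMap K σ) with hQ
  have hQσ₁ : Q * krausMap K σ = 0 := by
    rw [hQ, Matrix.sub_mul, Matrix.one_mul, self_mul_pinv_mul_self hσ₁.1, sub_self]
  have hQKσ : ∀ e, Q * K e * σ = 0 := by
    refine mul_eq_zero_of_sum_re_trace_conj_eq_zero hσ ?_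
    have hsum : ∑ e, (Q * K e * σ * (Q * K e)ᴴ).trace = (Q * krausMap K σ * Qᴴ).trace := by
      simp only [krausMap_apply, Finset.mul_sum, Finset.sum_mul, trace_sum, conjTranspose_mul,
        Matrix.mul_assoc]
    rw [hsum, hQσ₁, Matrix.zero_mul, trace_zero, Complex.zero_re]
  have hQKρ : ∀ e, Q * K e * ρ = 0 := fun e => by
    rw [← hsupp, ← Matrix.mul_assoc, ← Matrix.mul_assoc, hQKσ, Matrix.zero_mul, Matrix.zero_mul]
  simp only [krausMap_apply, Finset.mul_sum, ← Matrix.mul_assoc, hQKρ, Matrix.zero_mul,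
    Finset.sum_const_zero]

lemma SupportLE.mul_pinv_mul_self (hsupp : SupportLE ρ σ) (hσ : σ.IsHermitian)
    (hρ : ρ.IsHermitian) : ρ * pinv σ * σ = ρ := by
  have h := congrArg conjTranspose hsupp
  rwa [conjTranspose_mul, conjTranspose_mul, hσ.eq, hρ.eq, (isHermitian_pinv σ).eq,
    ← Matrix.mul_assoc] at h

variable (hσ : σ.PosSemidef) (hρ : ρ.PosSemidef) (hK : ∑ e, (K e)ᴴ * K e = 1)
include hK

lemma re_trace_mul_sylvesterSolution_krausMap_le {s : ℝ} (hs : 0 < s) :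
    (krausMap K ρ * sylvesterSolution (posSemidef_krausMap K hσ).1
        (posSemidef_krausMap K hρ).1 s).trace.re ≤
      (ρ * sylvesterSolution hσ.1 hρ.1 s).trace.re := by
  have hdefect := congrArg Complex.re <| sum_trace_sylvester_defect hK hσ.1 hρ.1
    (sylvesterSolution_spec hσ hρ hs)
    (sylvesterSolution_spec (posSemidef_krausMap K hσ) (posSemidef_krausMap K hρ) hs)
  have hX : ((sylvesterSolution hσ.1 hρ.1 s)ᴴ * ρ).trace.re =
      (ρ * sylvesterSolution hσ.1 hρ.1 s).trace.re := by
    rw [← re_trace_conjTranspose, conjTranspose_mul, conjTranspose_conjTranspose, hρ.1.eq]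
  rw [Complex.add_re, Complex.smul_re, Complex.re_sum, Complex.re_sum, Complex.sub_re, hX]
    at hdefect
  rw [← sub_nonneg, ← hdefect]
  exact add_nonneg (Finset.sum_nonneg fun e _ => re_trace_conj_nonneg hσ _)
    (smul_nonneg hs.le (Finset.sum_nonneg fun e _ => re_trace_conj_nonneg hρ _))

variable (hsupp : SupportLE ρ σ) (heq : relEntropy (krausMap K ρ) (krausMap K σ) = relEntropy ρ σ)
include hσ hρ hsupp heq

lemma inverse_moments_eq_of_relEntropy_eq :
    (krausMap K ρ * pinv (krausMap K σ) * krausMap K ρ).trace.re = (ρ * pinv σ * ρ).trace.re ∧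
      (pinv (krausMap K σ) * krausMap K ρ * krausMap K ρ *
          (krausMap K ρ * pinv (krausMap K σ))).trace.re =
        (pinv σ * ρ * ρ * (ρ * pinv σ)).trace.re := by
  have hσ₁ := posSemidef_krausMap K hσ
  have hρ₁ := posSemidef_krausMap K hρ
  have hsupp₁ := supportLE_krausMap hσ hsupp K
  rw [re_trace_mul_pinv_mul hσ hρ hsupp, re_trace_mul_pinv_mul hσ₁ hρ₁ hsupp₁,
    re_trace_pinv_mul_cube_mul_pinv hσ hρ hsupp, re_trace_pinv_mul_cube_mul_pinv hσ₁ hρ₁ hsupp₁]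
  have hmoments := inverse_moments_eq_zero
    (u := Sum.elim (modularWeight hσ.1 hρ.1) fun x => -modularWeight hσ₁.1 hρ₁.1 x)
    (t := Sum.elim (modularRatio hσ.1 hρ.1) (modularRatio hσ₁.1 hρ₁.1)) ?_ ?_ ?_ ?_
  · simp only [Fintype.sum_sum_type, Sum.elim_inl, Sum.elim_inr, neg_div, Finset.sum_neg_distrib]
      at hmoments
    exact ⟨by linarith [hmoments.1], by linarith [hmoments.2]⟩
  · rintro (x | x) hx
    · exact modularRatio_pos hσ hρ hsupp hx
    · exact modularRatio_pos hσ₁ hρ₁ hsupp₁ (neg_ne_zero.mp hx)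
  · simp only [Fintype.sum_sum_type, Sum.elim_inl, Sum.elim_inr, Finset.sum_neg_distrib,
      ← re_trace_eq_sum_modularWeight, trace_krausMap_of_sum_eq_one hK, add_neg_cancel]
  · rw [relEntropy_eq_neg_sum_modularWeight hσ hρ hsupp,
      relEntropy_eq_neg_sum_modularWeight hσ₁ hρ₁ hsupp₁] at heq
    simp only [Fintype.sum_sum_type, Sum.elim_inl, Sum.elim_inr, neg_mul, Finset.sum_neg_distrib]
    linarith
  · intro s hs
    have hle := re_trace_mul_sylvesterSolution_krausMap_le hσ hρ hK hs
    rw [re_trace_mul_sylvesterSolution hσ hρ hsupp hs,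
      re_trace_mul_sylvesterSolution hσ₁ hρ₁ hsupp₁ hs] at hle
    simp only [Fintype.sum_sum_type, Sum.elim_inl, Sum.elim_inr, neg_div, Finset.sum_neg_distrib]
    linarith

lemma mul_pinv_krausMap_mul_eq (e : κ) :
    krausMap K ρ * pinv (krausMap K σ) * K e * σ = K e * ρ := by
  have hρ₁ := posSemidef_krausMap K hρ
  have hX : (pinv σ * ρ)ᴴ = ρ * pinv σ := by
    rw [conjTranspose_mul, hρ.1.eq, (isHermitian_pinv σ).eq]
  have hY : (pinv (krausMap K σ) * krausMap K ρ)ᴴ = krausMap K ρ * pinv (krausMap K σ) := by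
    rw [conjTranspose_mul, hρ₁.1.eq, (isHermitian_pinv _).eq]
  have hdefect := sum_trace_sylvester_defect hK (X := pinv σ * ρ)
    (Y := pinv (krausMap K σ) * krausMap K ρ) hσ.1 hρ.1 (s := 0)
    (by rw [zero_smul, add_zero, ← Matrix.mul_assoc, hsupp])
    (by rw [zero_smul, add_zero, ← Matrix.mul_assoc, supportLE_krausMap hσ hsupp K])
  rw [zero_smul, add_zero, hX, hY, ← Matrix.mul_assoc] at hdefect
  have hzero := mul_eq_zero_of_sum_re_trace_conj_eq_zero hσ (by
    rw [hdefect, Complex.sub_re, sub_eq_zero]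
    exact (inverse_moments_eq_of_relEntropy_eq hσ hρ hK hsupp heq).1.symm) e
  rwa [Matrix.sub_mul, sub_eq_zero, Matrix.mul_assoc (K e), hsupp.mul_pinv_mul_self hσ.1 hρ.1]
    at hzero

lemma pinv_mul_krausMap_mul_eq (e : κ) :
    pinv (krausMap K σ) * krausMap K ρ * K e * ρ = K e * pinv σ * ρ * ρ := by
  have hρ₁ := posSemidef_krausMap K hρ
  have hX : (pinv σ * ρ)ᴴ = ρ * pinv σ := by
    rw [conjTranspose_mul, hρ.1.eq, (isHermitian_pinv σ).eq]
  have hY : (pinv (krausMap K σ) * krausMap K ρ)ᴴ = krausMap K ρ * pinv (krausMap K σ) := by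
    rw [conjTranspose_mul, hρ₁.1.eq, (isHermitian_pinv _).eq]
  have hpinv : pinv σ * ρ * ρ = σ * (pinv σ * (pinv σ * ρ * ρ)) := by
    simp only [← Matrix.mul_assoc]
    rw [← (commute_pinv σ).eq, pinv_mul_self_mul_pinv hσ.1]
  have hcross : (krausMap K (pinv σ * ρ * ρ) * (krausMap K ρ * pinv (krausMap K σ))).trace =
      (pinv σ * ρ * ρ * (ρ * pinv σ)).trace := by
    rw [trace_mul_comm, hpinv,
      mul_krausMap_mul fun e => mul_pinv_krausMap_mul_eq hσ hρ hK hsupp heq e,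
      trace_krausMap_of_sum_eq_one hK, ← hpinv, ← Matrix.mul_assoc, trace_mul_comm]
  have hcross' : (pinv (krausMap K σ) * krausMap K ρ * krausMap K (ρ * (ρ * pinv σ))).trace.re =
      (pinv σ * ρ * ρ * (ρ * pinv σ)).trace.re := by
    rw [← hcross, ← hY, ← re_trace_conjTranspose, conjTranspose_mul, ← conjTranspose_krausMap,
      ← hX, conjTranspose_mul ρ, conjTranspose_conjTranspose, hρ.1.eq]
  have hcomm := sum_trace_conj_commutator hK (pinv (krausMap K σ) * krausMap K ρ) (pinv σ * ρ) ρ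
  rw [hX, hY] at hcomm
  have hzero := mul_eq_zero_of_sum_re_trace_conj_eq_zero hρ (by
    rw [hcomm, Complex.add_re, Complex.sub_re, Complex.sub_re, hcross, hcross',
      (inverse_moments_eq_of_relEntropy_eq hσ hρ hK hsupp heq).2]
    ring) e
  rwa [Matrix.sub_mul, sub_eq_zero, ← Matrix.mul_assoc (K e)] at hzero

lemma pinv_mul_sq_mul_pinv_krausMap_mul_eq (e : κ) :
    pinv (krausMap K σ) * krausMap K ρ * (krausMap K ρ * pinv (krausMap K σ)) * K e * σ =
      K e * pinv σ * ρ * ρ := by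
  rw [← pinv_mul_krausMap_mul_eq hσ hρ hK hsupp heq, Matrix.mul_assoc _ (K e) ρ,
    ← mul_pinv_krausMap_mul_eq hσ hρ hK hsupp heq]
  simp only [Matrix.mul_assoc]

end Sufficiency

section Blocks

variable {α α' β β' γ κ : Type*}

/-- The block of `M` at `(a, c)` for the first tensor factor, an operator on the second factor. -/
def block (M : Matrix (α × β) (α' × β') ℂ) (a : α) (c : α') : Matrix β β' ℂ :=
  M.submatrix (Prod.mk a) (Prod.mk c)

lemma block_ext {M N : Matrix (α × β) (α' × β') ℂ} (h : ∀ a c, block M a c = block N a c) :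
    M = N := by
  ext ⟨a, b⟩ ⟨c, b'⟩
  exact congrFun (congrFun (h a c) b) b'

lemma block_conjTranspose (M : Matrix (α × β) (α' × β') ℂ) (a : α') (c : α) :
    block Mᴴ a c = (block M c a)ᴴ := rfl

lemma block_sum [Fintype κ] (M : κ → Matrix (α × β) (α' × β') ℂ) (a : α) (c : α') :
    block (∑ e, M e) a c = ∑ e, block (M e) a c := by
  ext
  simp [block, Matrix.sum_apply]

lemma block_mul [Fintype α'] [Fintype β'] {α'' β'' : Type*} (M : Matrix (α × β) (α' × β') ℂ)
    (N : Matrix (α' × β') (α'' × β'') ℂ) (a : α) (c : α'') :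
    block (M * N) a c = ∑ b, block M a b * block N b c := by
  ext
  simp [block, Matrix.mul_apply, Matrix.sum_apply, Fintype.sum_prod_type]

lemma idTensor_kronecker (Λ : Matrix β β ℂ →ₗ[ℂ] Matrix β' β' ℂ)
    (A : Matrix α α ℂ) (B : Matrix β β ℂ) : idTensor Λ (A ⊗ₖ B) = A ⊗ₖ Λ B :=
  block_ext fun a c => map_smul Λ (A a c) B

section OneKronecker

variable [DecidableEq α]

lemma block_one_kronecker (A : Matrix β β' ℂ) (a c : α) :
    block ((1 : Matrix α α ℂ) ⊗ₖ A) a c = if a = c then A else 0 := by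
  ext
  split_ifs with h <;> simp [block, h]

lemma block_one_kronecker_mul [Fintype α] [Fintype β'] (A : Matrix β β' ℂ)
    (M : Matrix (α × β') (α' × γ) ℂ) (a : α) (c : α') :
    block ((1 : Matrix α α ℂ) ⊗ₖ A * M) a c = A * block M a c := by
  rw [block_mul, Finset.sum_eq_single a _ (by simp), block_one_kronecker, if_pos rfl]
  exact fun b _ hb => by rw [block_one_kronecker, if_neg hb.symm, Matrix.zero_mul]

lemma block_mul_one_kronecker [Fintype α] [Fintype β] (M : Matrix (α' × γ) (α × β) ℂ)
    (A : Matrix β β' ℂ) (a : α') (c : α) :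
    block (M * (1 : Matrix α α ℂ) ⊗ₖ A) a c = block M a c * A := by
  rw [block_mul, Finset.sum_eq_single c _ (by simp), block_one_kronecker, if_pos rfl]
  exact fun b _ hb => by rw [block_one_kronecker, if_neg hb, Matrix.mul_zero]

lemma block_krausMap [Fintype α] [Fintype β] [Fintype κ] (K : κ → Matrix β' β ℂ)
    (M : Matrix (α × β) (α × β) ℂ) (a c : α) :
    block (krausMap (fun e => (1 : Matrix α α ℂ) ⊗ₖ K e) M) a c = krausMap K (block M a c) := by
  simp only [krausMap_apply, block_sum, conjTranspose_kronecker, conjTranspose_one,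
    block_mul_one_kronecker, block_one_kronecker_mul]

lemma idTensor_krausMap [Fintype α] [Fintype β] [Fintype κ] (K : κ → Matrix β' β ℂ)
    (M : Matrix (α × β) (α × β) ℂ) :
    idTensor (krausMap K) M = krausMap (fun e => (1 : Matrix α α ℂ) ⊗ₖ K e) M :=
  block_ext fun a c => (block_krausMap K M a c).symm

lemma krausMap_one_kronecker [Fintype α] [Fintype β] [Fintype κ] (K : κ → Matrix β' β ℂ)
    (A : Matrix β β ℂ) :
    krausMap (fun e => (1 : Matrix α α ℂ) ⊗ₖ K e) (1 ⊗ₖ A) = 1 ⊗ₖ krausMap K A := by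
  refine block_ext fun a c => ?_
  rw [block_krausMap, block_one_kronecker, block_one_kronecker]
  split_ifs <;> simp

lemma sum_conjTranspose_one_kronecker_mul_self [Fintype α] [Fintype β'] [DecidableEq β]
    [Fintype κ] {K : κ → Matrix β' β ℂ} (hK : ∑ e, (K e)ᴴ * K e = 1) :
    ∑ e, ((1 : Matrix α α ℂ) ⊗ₖ K e)ᴴ * ((1 : Matrix α α ℂ) ⊗ₖ K e) = 1 := by
  refine block_ext fun a c => ?_
  simp only [block_sum, conjTranspose_kronecker, conjTranspose_one, block_one_kronecker_mul,
    block_one_kronecker]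
  rw [← one_kronecker_one, block_one_kronecker]
  split_ifs <;> simp [hK]

end OneKronecker

section PartialTrace

variable [Fintype α]

lemma ptraceLeft_eq_sum_block (M : Matrix (α × β) (α × β) ℂ) :
    ptraceLeft M = ∑ a, block M a a := by
  ext b b'
  simp [ptraceLeft, block, Matrix.sum_apply]

lemma posSemidef_ptraceLeft {M : Matrix (α × β) (α × β) ℂ} (hM : M.PosSemidef) :
    (ptraceLeft M).PosSemidef := by
  rw [ptraceLeft_eq_sum_block]
  exact posSemidef_sum _ fun a _ => hM.submatrix (Prod.mk a)

lemma ptraceLeft_idTensor (Λ : Matrix β β ℂ →ₗ[ℂ] Matrix β' β' ℂ)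
    (M : Matrix (α × β) (α × β) ℂ) : ptraceLeft (idTensor Λ M) = Λ (ptraceLeft M) := by
  rw [ptraceLeft_eq_sum_block, ptraceLeft_eq_sum_block, map_sum]
  rfl

lemma trace_eq_trace_ptraceLeft [Fintype β] (M : Matrix (α × β) (α × β) ℂ) :
    M.trace = (ptraceLeft M).trace := by
  simp [Matrix.trace, ptraceLeft, Fintype.sum_prod_type_right]

lemma ptraceLeft_mul_one_kronecker [DecidableEq α] [Fintype β] (M : Matrix (α × β) (α × β) ℂ)
    (A : Matrix β β ℂ) : ptraceLeft (M * (1 : Matrix α α ℂ) ⊗ₖ A) = ptraceLeft M * A := by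
  simp only [ptraceLeft_eq_sum_block, block_mul_one_kronecker, Finset.sum_mul]

end PartialTrace

end Blocks

section BipartiteEntropy

variable {α β β' κ : Type*} [Fintype α] [DecidableEq α] [Fintype β] [DecidableEq β]
  [Fintype β'] [DecidableEq β'] [Fintype κ] {ρ : Matrix (α × β) (α × β) ℂ}

lemma cfc_one_kronecker (f : ℝ → ℝ) {A : Matrix β β ℂ} (hA : A.IsHermitian) :
    cfc f ((1 : Matrix α α ℂ) ⊗ₖ A) = 1 ⊗ₖ cfc f A := by
  let φ : Matrix β β ℂ →⋆ₐ[ℂ] Matrix (α × β) (α × β) ℂ :=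
    { toFun := fun M => 1 ⊗ₖ M
      map_one' := one_kronecker_one
      map_mul' := fun M N => by rw [← mul_kronecker_mul, Matrix.one_mul]
      map_zero' := kronecker_zero 1
      map_add' := kronecker_add 1
      commutes' := fun c => by
        simp [Algebra.algebraMap_eq_smul_one, kronecker_smul]
      map_star' := fun M => by simp [star_eq_conjTranspose, conjTranspose_kronecker] }
  exact (φ.map_cfc f A (continuousOn_real_spectrum f A)
    φ.toLinearMap.continuous_of_finiteDimensional hA.isSelfAdjoint (hA.isSelfAdjoint.map φ)).symm

lemma pinv_one_kronecker {A : Matrix β β ℂ} (hA : A.IsHermitian) :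
    pinv ((1 : Matrix α α ℂ) ⊗ₖ A) = 1 ⊗ₖ pinv A :=
  cfc_one_kronecker _ hA

lemma re_trace_cfc {A : Matrix β β ℂ} (hA : A.IsHermitian) (f : ℝ → ℝ) :
    (cfc f A).trace.re = ∑ i, f (hA.eigenvalues i) := by
  rw [cfc_eq_mul_diagonal_mul hA, trace_mul_cycle, conjTranspose_eigenvectorUnitary_mul_self,
    Matrix.one_mul, trace_diagonal, Complex.re_sum]
  simp only [Complex.ofReal_re]

lemma re_trace_mul_cfc_log {A : Matrix β β ℂ} (hA : A.IsHermitian) :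
    (A * cfc Real.log A).trace.re = -(Real.log 2 * vnEntropy A) := by
  rw [self_mul_cfc hA, re_trace_cfc hA, vnEntropy, dif_pos hA, mul_neg, neg_neg, Finset.mul_sum]
  refine Finset.sum_congr rfl fun i _ => ?_
  have hlog2 : Real.log 2 ≠ 0 := (Real.log_pos one_lt_two).ne'
  rw [Real.logb]
  field_simp

lemma relEntropy_one_kronecker_ptraceLeft (hρ : ρ.PosSemidef) :
    relEntropy ρ (1 ⊗ₖ ptraceLeft ρ) = Real.log 2 * (vnEntropy (ptraceLeft ρ) - vnEntropy ρ) := by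
  have hr := (posSemidef_ptraceLeft hρ).1
  rw [relEntropy, cfc_one_kronecker _ hr, Matrix.mul_sub, trace_sub, Complex.sub_re,
    re_trace_mul_cfc_log hρ.1, trace_eq_trace_ptraceLeft (ρ * _), ptraceLeft_mul_one_kronecker,
    re_trace_mul_cfc_log hr]
  ring

lemma supportLE_one_kronecker_ptraceLeft (hρ : ρ.PosSemidef) :
    SupportLE ρ (1 ⊗ₖ ptraceLeft ρ) := by
  have hr := (posSemidef_ptraceLeft hρ).1
  have hQ : 1 - (1 : Matrix α α ℂ) ⊗ₖ ptraceLeft ρ * pinv ((1 : Matrix α α ℂ) ⊗ₖ ptraceLeft ρ) =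
      1 ⊗ₖ (1 - ptraceLeft ρ * pinv (ptraceLeft ρ)) := by
    rw [pinv_one_kronecker hr, ← mul_kronecker_mul, Matrix.one_mul, sub_eq_iff_eq_add,
      ← kronecker_add, sub_add_cancel, one_kronecker_one]
  rw [supportLE_iff, hQ]
  refine mul_eq_zero_of_re_trace_conj_eq_zero hρ ?_
  rw [Matrix.mul_assoc, trace_mul_comm, Matrix.mul_assoc, conjTranspose_kronecker,
    conjTranspose_one, ← mul_kronecker_mul, Matrix.one_mul, trace_eq_trace_ptraceLeft,
    ptraceLeft_mul_one_kronecker, trace_mul_comm, Matrix.mul_assoc, Matrix.sub_mul, Matrix.one_mul,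
    self_mul_pinv_mul_self hr, sub_self, Matrix.mul_zero, trace_zero, Complex.zero_re]

end BipartiteEntropy

section TwistedCommutation

variable {α β : Type*} [Fintype α] [Fintype β]

lemma commute_of_mul_sq_eq {k ρ : Matrix β β ℂ} (hk : k.IsHermitian) (hρ : ρ.IsHermitian)
    (h : k * (ρ * ρ) = ρ * k * ρ) : Commute k ρ := by
  have hCρ : (k * ρ - ρ * k) * ρ = 0 := by
    rw [Matrix.sub_mul, Matrix.mul_assoc k, h, sub_self]
  have hCH : (k * ρ - ρ * k)ᴴ = -(k * ρ - ρ * k) := by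
    rw [conjTranspose_sub, conjTranspose_mul, conjTranspose_mul, hk.eq, hρ.eq, neg_sub]
  have hρC : ρ * (k * ρ - ρ * k) = 0 := by
    have h' := congrArg conjTranspose hCρ
    rwa [conjTranspose_mul, hCH, hρ.eq, Matrix.mul_neg, conjTranspose_zero, neg_eq_zero] at h'
  refine sub_eq_zero.mp (trace_conjTranspose_mul_self_eq_zero_iff.mp ?_)
  rw [hCH]
  nth_rewrite 2 [← sub_zero (k * ρ - ρ * k)]
  rw [Matrix.neg_mul, trace_neg, neg_eq_zero, sub_zero, Matrix.mul_sub, trace_sub,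
    ← Matrix.mul_assoc, ← Matrix.mul_assoc, hCρ, Matrix.zero_mul, trace_zero, sub_zero,
    trace_mul_comm, ← Matrix.mul_assoc, hρC, Matrix.zero_mul, trace_zero]

variable {ρ : Matrix (α × β) (α × β) ℂ} {r k : Matrix β β ℂ}

/-- The adjoint `Xᴴ` commutes with the blocks of `ρ` for the product `X ∘ Y = X k Y`, so by
cyclicity of the trace the two terms of `X` contribute equally to `tr X k Xᴴ`. -/
lemma mul_eq_zero_of_twisted_commute (hρ : ρ.IsHermitian) (hk : k.PosSemidef) {X : Matrix β β ℂ}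
    {a c : α}
    (hX : X = k * block (ρ * ρ) a c - ∑ e, block ρ a e * k * block ρ e c)
    (hblock : ∀ a c a' c',
      block ρ a c * k * block ρ a' c' = block ρ a' c' * k * block ρ a c)
    (hcomm : ∀ a' c', X * k * block ρ a' c' = block ρ a' c' * k * X) : X * k = 0 := by
  have hcomm' : ∀ a' c', Xᴴ * k * block ρ a' c' = block ρ a' c' * k * Xᴴ := fun a' c' => by
    have h := congrArg conjTranspose (hcomm c' a')
    simpa only [conjTranspose_mul, ← block_conjTranspose, hρ.eq, hk.1.eq, ← Matrix.mul_assoc]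
      using h.symm
  have hterm : ∀ e, (block ρ a e * k * block ρ e c * k * Xᴴ).trace =
      (k * block ρ a e * block ρ e c * k * Xᴴ).trace := fun e => by
    calc (block ρ a e * k * block ρ e c * k * Xᴴ).trace
        = (block ρ e c * k * Xᴴ * k * block ρ a e).trace := by
          rw [hblock, Matrix.mul_assoc _ k Xᴴ, Matrix.mul_assoc _ (block ρ a e),
            ← Matrix.mul_assoc (block ρ a e), ← hcomm']
          simp only [Matrix.mul_assoc]
      _ = (k * block ρ a e * block ρ e c * k * Xᴴ).trace := by
          rw [Matrix.mul_assoc, trace_mul_comm]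
          simp only [Matrix.mul_assoc]
  refine mul_eq_zero_of_re_trace_conj_eq_zero hk ?_
  nth_rewrite 1 [hX]
  rw [block_mul, Finset.mul_sum, ← Finset.sum_sub_distrib, Finset.sum_mul, Finset.sum_mul,
    trace_sum, Finset.sum_eq_zero fun e _ => ?_, Complex.zero_re]
  rw [Matrix.sub_mul, Matrix.sub_mul, trace_sub, hterm, ← Matrix.mul_assoc, sub_self]

variable [DecidableEq α] (hρ : ρ.IsHermitian) (hr : r.IsHermitian) (hk : k.PosSemidef)
  (hrk : (1 : Matrix α α ℂ) ⊗ₖ (r * k) * ρ = ρ)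
  (hblock : ∀ a c a' c',
    block ρ a c * k * block ρ a' c' = block ρ a' c' * k * block ρ a c)
  (hsq : ∀ a c a' c',
    k * block (ρ * ρ) a c * k * block ρ a' c' = block ρ a' c' * k * (k * block (ρ * ρ) a c))

include hρ hr hk hrk hblock hsq

lemma one_kronecker_mul_sq_eq :
    (1 : Matrix α α ℂ) ⊗ₖ k * (ρ * ρ) = ρ * (1 : Matrix α α ℂ) ⊗ₖ k * ρ := by
  rw [← sub_eq_zero]
  set M := (1 : Matrix α α ℂ) ⊗ₖ k * (ρ * ρ) - ρ * (1 : Matrix α α ℂ) ⊗ₖ k * ρ with hM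
  have hMblock : ∀ a c, block M a c =
      k * block (ρ * ρ) a c - ∑ e, block ρ a e * k * block ρ e c := fun a c => by
    rw [← block_one_kronecker_mul, ← Finset.sum_congr rfl fun e _ =>
      congrArg (· * _) (block_mul_one_kronecker ρ k a e), ← block_mul]
    rfl
  have hMsupp : M * (1 : Matrix α α ℂ) ⊗ₖ (k * r) = M := by
    have hkr : ρ * (1 : Matrix α α ℂ) ⊗ₖ (k * r) = ρ := by
      simpa [conjTranspose_kronecker, hρ.eq, hr.eq, hk.1.eq] using congrArg conjTranspose hrk
    simp only [hM, Matrix.sub_mul, Matrix.mul_assoc, hkr]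
  refine block_ext fun a c => ?_
  have hcomm : ∀ a' c', block M a c * k * block ρ a' c' = block ρ a' c' * k * block M a c :=
    fun a' c' => by
      have hterm : ∀ e, block ρ a e * k * block ρ e c * k * block ρ a' c' =
          block ρ a' c' * k * (block ρ a e * k * block ρ e c) := fun e => by
        calc _ = block ρ a e * k * (block ρ e c * k * block ρ a' c') := by
              simp only [Matrix.mul_assoc]
          _ = block ρ a e * k * block ρ a' c' * k * block ρ e c := by
              rw [hblock e c]
              simp only [Matrix.mul_assoc]
          _ = _ := by
              rw [hblock a e]
              simp only [Matrix.mul_assoc]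
      simp only [hMblock, Matrix.sub_mul, Matrix.mul_sub, hsq, Finset.sum_mul, Finset.mul_sum,
        hterm]
  rw [← hMsupp, block_mul_one_kronecker, ← Matrix.mul_assoc,
    mul_eq_zero_of_twisted_commute hρ hk (hMblock a c) hblock hcomm, Matrix.zero_mul]
  rfl

/-- `k` plays the role of the pseudo-inverse of the marginal `r`, and the hypotheses say that the
blocks of `ρ` and of `(1 ⊗ k) ρ²` commute in the algebra with product `X ∘ Y = X k Y`. -/
lemma commute_block_of_twisted_commute (a c a' c' : α) :
    Commute (block ρ a c) (block ρ a' c') := by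
  have hcomm : ∀ a c, k * block ρ a c = block ρ a c * k := fun a c => by
    rw [← block_one_kronecker_mul, ← block_mul_one_kronecker]
    have hkH : ((1 : Matrix α α ℂ) ⊗ₖ k).IsHermitian := by
      rw [IsHermitian, conjTranspose_kronecker, conjTranspose_one, hk.1.eq]
    exact congrArg (block · a c)
      (commute_of_mul_sq_eq hkH hρ (one_kronecker_mul_sq_eq hρ hr hk hrk hblock hsq)).eq
  have hrk' : ∀ a c, r * k * block ρ a c = block ρ a c := fun a c => by
    rw [← block_one_kronecker_mul, hrk]
  have h := hblock a c a' c'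
  rw [← hcomm, ← hcomm, Matrix.mul_assoc, Matrix.mul_assoc] at h
  calc block ρ a c * block ρ a' c' = r * (k * (block ρ a c * block ρ a' c')) := by
        rw [← Matrix.mul_assoc, ← Matrix.mul_assoc, hrk']
    _ = r * (k * (block ρ a' c' * block ρ a c)) := by rw [h]
    _ = block ρ a' c' * block ρ a c := by rw [← Matrix.mul_assoc, ← Matrix.mul_assoc, hrk']

end TwistedCommutation

section Lifting

variable {α β β' κ : Type*} [Fintype β] [Fintype β']

/-- The operator `A` is implemented at the output of the Kraus operators `K`, after the operator `r`
at the input: one operator `Y` on the output satisfies `Y Kₑ r = Kₑ A` for every `e`. -/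
def LiftsThrough (K : κ → Matrix β' β ℂ) (r A : Matrix β β ℂ) : Prop :=
  ∃ Y : Matrix β' β' ℂ, ∀ e, Y * K e * r = K e * A

variable [Fintype α] [DecidableEq α] {K : κ → Matrix β' β ℂ} {ρ : Matrix (α × β) (α × β) ℂ}

lemma liftsThrough_block_of_forall_eq {M : Matrix (α × β') (α × β') ℂ}
    {N : Matrix (α × β) (α × β) ℂ} {r : Matrix β β ℂ}
    (h : ∀ e, M * (1 : Matrix α α ℂ) ⊗ₖ K e * (1 : Matrix α α ℂ) ⊗ₖ r =
      (1 : Matrix α α ℂ) ⊗ₖ K e * N) (a c : α) : LiftsThrough K r (block N a c) :=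
  ⟨block M a c, fun e => by
    rw [← block_mul_one_kronecker, ← block_mul_one_kronecker, h, block_one_kronecker_mul]⟩

variable [DecidableEq β] [DecidableEq β'] [Fintype κ]

lemma relEntropy_idTensor_krausMap (hρ : ρ.PosSemidef)
    (heq : vnEntropy (ptraceLeft (idTensor (krausMap K) ρ)) - vnEntropy (idTensor (krausMap K) ρ) =
      vnEntropy (ptraceLeft ρ) - vnEntropy ρ) :
    relEntropy (krausMap (fun e => (1 : Matrix α α ℂ) ⊗ₖ K e) ρ)
        (krausMap (fun e => (1 : Matrix α α ℂ) ⊗ₖ K e) (1 ⊗ₖ ptraceLeft ρ)) =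
      relEntropy ρ (1 ⊗ₖ ptraceLeft ρ) := by
  have hρ₁ := posSemidef_krausMap (fun e => (1 : Matrix α α ℂ) ⊗ₖ K e) hρ
  rw [krausMap_one_kronecker, ← ptraceLeft_idTensor, idTensor_krausMap,
    relEntropy_one_kronecker_ptraceLeft hρ₁, ← idTensor_krausMap, heq,
    relEntropy_one_kronecker_ptraceLeft hρ]

variable (hK : ∑ e, (K e)ᴴ * K e = 1) (hρ : ρ.PosSemidef)
  (heq : vnEntropy (ptraceLeft (idTensor (krausMap K) ρ)) - vnEntropy (idTensor (krausMap K) ρ) =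
    vnEntropy (ptraceLeft ρ) - vnEntropy ρ)
include hK hρ heq

lemma liftsThrough_block (a c : α) : LiftsThrough K (ptraceLeft ρ) (block ρ a c) :=
  liftsThrough_block_of_forall_eq (mul_pinv_krausMap_mul_eq
    (PosSemidef.one.kronecker (posSemidef_ptraceLeft hρ)) hρ
    (sum_conjTranspose_one_kronecker_mul_self hK) (supportLE_one_kronecker_ptraceLeft hρ)
    (relEntropy_idTensor_krausMap hρ heq)) a c

lemma liftsThrough_pinv_mul_block_sq (a c : α) :
    LiftsThrough K (ptraceLeft ρ) (pinv (ptraceLeft ρ) * block (ρ * ρ) a c) := by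
  have h := pinv_mul_sq_mul_pinv_krausMap_mul_eq
    (PosSemidef.one.kronecker (posSemidef_ptraceLeft hρ)) hρ
    (sum_conjTranspose_one_kronecker_mul_self hK) (supportLE_one_kronecker_ptraceLeft hρ)
    (relEntropy_idTensor_krausMap hρ heq)
  simp only [pinv_one_kronecker (posSemidef_ptraceLeft hρ).1, Matrix.mul_assoc _ _ ρ] at h
  rw [← block_one_kronecker_mul]
  exact liftsThrough_block_of_forall_eq h a c

end Lifting

section Marginals

variable {β₁ β₂ β κ : Type*}

/-- The Kraus operators of the first marginal of a channel into a bipartite system. -/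
def krausFst (K : κ → Matrix (β₁ × β₂) β ℂ) (x : κ × β₂) : Matrix β₁ β ℂ :=
  (K x.1).submatrix (·, x.2) id

/-- The Kraus operators of the second marginal of a channel into a bipartite system. -/
def krausSnd (K : κ → Matrix (β₁ × β₂) β ℂ) (x : κ × β₁) : Matrix β₂ β ℂ :=
  (K x.1).submatrix (x.2, ·) id

variable [Fintype κ] {K : κ → Matrix (β₁ × β₂) β ℂ}

lemma ptraceThird_idTensor_krausMap [Fintype β] [Fintype β₂] {α : Type*}
    (ρ : Matrix (α × β) (α × β) ℂ) :
    ptraceThird (idTensor (krausMap K) ρ) = idTensor (krausMap (krausFst K)) ρ := by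
  refine block_ext fun a c => ?_
  ext b b'
  simp [ptraceThird, block, idTensor, krausMap_apply, krausFst, Matrix.sum_apply,
    Fintype.sum_prod_type_right, Matrix.mul_apply]

lemma ptraceSecond_idTensor_krausMap [Fintype β] [Fintype β₁] {α : Type*}
    (ρ : Matrix (α × β) (α × β) ℂ) :
    ptraceSecond (idTensor (krausMap K) ρ) = idTensor (krausMap (krausSnd K)) ρ := by
  refine block_ext fun a c => ?_
  ext b b'
  simp [ptraceSecond, block, idTensor, krausMap_apply, krausSnd, Matrix.sum_apply,
    Fintype.sum_prod_type_right, Matrix.mul_apply]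

variable [Fintype β₁] [Fintype β₂]

lemma sum_conjTranspose_krausFst_mul_self :
    ∑ x, (krausFst K x)ᴴ * krausFst K x = ∑ e, (K e)ᴴ * K e := by
  ext b b'
  simp [krausFst, Matrix.sum_apply, Matrix.mul_apply, Fintype.sum_prod_type_right,
    Finset.sum_comm (s := (Finset.univ : Finset β₂))]

lemma sum_conjTranspose_krausSnd_mul_self :
    ∑ x, (krausSnd K x)ᴴ * krausSnd K x = ∑ e, (K e)ᴴ * K e := by
  ext b b'
  simp [krausSnd, Matrix.sum_apply, Matrix.mul_apply, Fintype.sum_prod_type]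

lemma LiftsThrough.twisted_commute [Fintype β] [DecidableEq β] (hK : ∑ e, (K e)ᴴ * K e = 1)
    {r k A B : Matrix β β ℂ} (hA : LiftsThrough (krausFst K) r A)
    (hB : LiftsThrough (krausSnd K) r B) (hrA : r * k * A = A) (hrB : r * k * B = B) :
    A * k * B = B * k * A := by
  classical
  obtain ⟨Y, hY⟩ := hA
  obtain ⟨Z, hZ⟩ := hB
  have hYK : ∀ e, Y ⊗ₖ (1 : Matrix β₂ β₂ ℂ) * K e * r = K e * A := fun e => by
    ext ⟨b₁, b₂⟩ b
    have h := congrFun (congrFun (hY (e, b₂)) b₁) b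
    simpa [krausFst, Matrix.mul_apply, Fintype.sum_prod_type, Matrix.one_apply] using h
  have hZK : ∀ e, (1 : Matrix β₁ β₁ ℂ) ⊗ₖ Z * K e * r = K e * B := fun e => by
    ext ⟨b₁, b₂⟩ b
    have h := congrFun (congrFun (hZ (e, b₁)) b₂) b
    simpa [krausSnd, Matrix.mul_apply, Fintype.sum_prod_type, Matrix.one_apply] using h
  have hcomm : Commute (Y ⊗ₖ (1 : Matrix β₂ β₂ ℂ)) ((1 : Matrix β₁ β₁ ℂ) ⊗ₖ Z) := by
    rw [Commute, SemiconjBy, ← mul_kronecker_mul, ← mul_kronecker_mul]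
    simp only [Matrix.one_mul, Matrix.mul_one]
  have hKAB : ∀ e, K e * (A * k * B) = K e * (B * k * A) := fun e => by
    calc K e * (A * k * B)
        = Y ⊗ₖ (1 : Matrix β₂ β₂ ℂ) * K e * (r * k * B) := by
          simp only [← Matrix.mul_assoc, ← hYK]
      _ = Y ⊗ₖ (1 : Matrix β₂ β₂ ℂ) * ((1 : Matrix β₁ β₁ ℂ) ⊗ₖ Z) * K e * r := by
          rw [hrB, Matrix.mul_assoc, ← hZK]
          simp only [Matrix.mul_assoc]
      _ = (1 : Matrix β₁ β₁ ℂ) ⊗ₖ Z * K e * (r * k * A) := by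
          rw [hcomm.eq, hrA, Matrix.mul_assoc _ (K e) A, ← hYK]
          simp only [Matrix.mul_assoc]
      _ = K e * (B * k * A) := by simp only [← Matrix.mul_assoc, ← hZK]
  rw [← Matrix.one_mul (A * k * B), ← Matrix.one_mul (B * k * A), ← hK, Finset.sum_mul,
    Finset.sum_mul]
  simp only [Matrix.mul_assoc] at hKAB ⊢
  simp only [hKAB]

end Marginals

section KrausRepresentation

variable {β β' : Type*} [Fintype β] [Fintype β']

lemma exists_eq_krausMap {Λ : Matrix β β ℂ →ₗ[ℂ] Matrix β' β' ℂ} (hΛ : IsCompletelyPositive Λ) :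
    ∃ K : Fin (Fintype.card β) × β' → Matrix β' β ℂ, Λ = krausMap K := by
  classical
  let e := Fintype.equivFin β
  let v : Fin (Fintype.card β) × β → ℂ := fun p => if e p.2 = p.1 then 1 else 0
  have hv : ∀ i j, block (vecMulVec v (star v)) (e i) (e j) = single i j 1 := fun i j => by
    ext b b'
    simp [block, vecMulVec_apply, v, single_apply, ← ite_and, eq_comm, and_comm]
  -- The Kraus operators are the rows of a square root `C` of the Choi matrix of `Λ`.
  open scoped MatrixOrder in
  obtain ⟨C, hC⟩ := CStarAlgebra.nonneg_iff_eq_star_mul_self.mp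
    (hΛ _ _ (posSemidef_vecMulVec_self_star v)).nonneg
  refine ⟨fun m => Matrix.of fun x i => star (C m (e i, x)), Matrix.ext_linearMap _ fun i j => ?_⟩
  ext x y
  calc Λ (single i j 1) x y = idTensor Λ (vecMulVec v (star v)) (e i, x) (e j, y) := by
        rw [← hv]
        rfl
    _ = ∑ m, star (C m (e i, x)) * C m (e j, y) := by
        rw [hC, star_eq_conjTranspose, Matrix.mul_apply]
        rfl
    _ = _ := by
        simp [krausMap_apply, Matrix.sum_apply, Matrix.mul_apply, single_apply, ite_and]

lemma sum_conjTranspose_mul_self_eq_one [DecidableEq β] {κ : Type*} [Fintype κ]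
    {K : κ → Matrix β' β ℂ} (hK : ∀ M, (krausMap K M).trace = M.trace) : ∑ e, (K e)ᴴ * K e = 1 :=
  ext_iff_trace_mul_right.mpr fun M => by rw [← trace_krausMap, hK, Matrix.one_mul]

lemma isQuantumChannel_krausMap [DecidableEq β] {κ : Type*} [Fintype κ] {K : κ → Matrix β' β ℂ}
    (hK : ∑ e, (K e)ᴴ * K e = 1) :
    IsQuantumChannel (krausMap K) := by
  refine ⟨fun k M hM => ?_, trace_krausMap_of_sum_eq_one hK⟩
  rw [idTensor_krausMap]
  exact posSemidef_krausMap _ hM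

end KrausRepresentation

section Forward

variable {α β β' κ : Type*} [Fintype β] [DecidableEq β] [Fintype β'] [Fintype κ]

lemma ptraceRight_idTensor_krausMap {K : κ → Matrix β' β ℂ} (hK : ∑ e, (K e)ᴴ * K e = 1)
    (ρ : Matrix (α × β) (α × β) ℂ) : ptraceRight (idTensor (krausMap K) ρ) = ptraceRight ρ := by
  ext a c
  exact trace_krausMap_of_sum_eq_one hK (block ρ a c)

variable [Fintype α]

lemma ptraceLeft_mul_pinv_mul_block {ρ : Matrix (α × β) (α × β) ℂ} (hρ : ρ.PosSemidef) (a c : α) :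
    ptraceLeft ρ * pinv (ptraceLeft ρ) * block ρ a c = block ρ a c := by
  classical
  have h := supportLE_one_kronecker_ptraceLeft hρ
  rw [SupportLE, pinv_one_kronecker (posSemidef_ptraceLeft hρ).1, ← mul_kronecker_mul,
    Matrix.one_mul] at h
  rw [← block_one_kronecker_mul, h]

variable [DecidableEq α]

lemma entropy_sub_eq_of_mutualInfo_eq [DecidableEq β'] {K : κ → Matrix β' β ℂ}
    (hK : ∑ e, (K e)ᴴ * K e = 1) {ρ : Matrix (α × β) (α × β) ℂ}
    (h : mutualInfo (idTensor (krausMap K) ρ) = mutualInfo ρ) :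
    vnEntropy (ptraceLeft (idTensor (krausMap K) ρ)) - vnEntropy (idTensor (krausMap K) ρ) =
      vnEntropy (ptraceLeft ρ) - vnEntropy ρ := by
  rw [mutualInfo, mutualInfo, ptraceRight_idTensor_krausMap hK] at h
  linarith

lemma commute_block_of_mutualInfo_eq {β₁ β₂ : Type*} [Fintype β₁] [DecidableEq β₁] [Fintype β₂]
    [DecidableEq β₂] {ρ : Matrix (α × β) (α × β) ℂ} (hρ : ρ.PosSemidef)
    {Γ : Matrix β β ℂ →ₗ[ℂ] Matrix (β₁ × β₂) (β₁ × β₂) ℂ} (hΓ : IsQuantumChannel Γ)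
    (h₁ : mutualInfo (ptraceThird (idTensor Γ ρ)) = mutualInfo ρ)
    (h₂ : mutualInfo (ptraceSecond (idTensor Γ ρ)) = mutualInfo ρ) (a c a' c' : α) :
    Commute (block ρ a c) (block ρ a' c') := by
  obtain ⟨hcp, htr⟩ := hΓ
  obtain ⟨K, rfl⟩ := exists_eq_krausMap hcp
  have hK := sum_conjTranspose_mul_self_eq_one htr
  have hK₁ := sum_conjTranspose_krausFst_mul_self.trans hK
  have hK₂ := sum_conjTranspose_krausSnd_mul_self.trans hK
  rw [ptraceThird_idTensor_krausMap] at h₁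
  rw [ptraceSecond_idTensor_krausMap] at h₂
  have heq₁ := entropy_sub_eq_of_mutualInfo_eq hK₁ h₁
  have heq₂ := entropy_sub_eq_of_mutualInfo_eq hK₂ h₂
  have hr := posSemidef_ptraceLeft hρ
  have hsupp := ptraceLeft_mul_pinv_mul_block hρ
  have hpinv : ∀ M : Matrix β β ℂ, ptraceLeft ρ * pinv (ptraceLeft ρ) * (pinv (ptraceLeft ρ) * M) =
      pinv (ptraceLeft ρ) * M := fun M => by
    rw [← (commute_pinv _).eq, ← Matrix.mul_assoc, pinv_mul_self_mul_pinv hr.1]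
  refine commute_block_of_twisted_commute hρ.1 hr.1 (posSemidef_pinv hr) ?_ ?_ ?_ a c a' c'
  · exact block_ext fun a c => by rw [block_one_kronecker_mul, hsupp]
  · exact fun a c a' c' => (liftsThrough_block hK₁ hρ heq₁ a c).twisted_commute hK
      (liftsThrough_block hK₂ hρ heq₂ a' c') (hsupp a c) (hsupp a' c')
  · exact fun a c a' c' => (liftsThrough_pinv_mul_block_sq hK₁ hρ heq₁ a c).twisted_commute hK
      (liftsThrough_block hK₂ hρ heq₂ a' c') (hpinv _) (hsupp a' c')

end Forward

section CommonEigenbasis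

variable {β : Type*} [Fintype β]

open scoped Function in
lemma exists_orthonormalBasis_mulVec_eq_smul {ι : Type*} {H : ι → Matrix β β ℂ}
    (hH : ∀ i, (H i).IsHermitian) (hcomm : ∀ i j, Commute (H i) (H j)) :
    ∃ b : OrthonormalBasis β ℂ (EuclideanSpace ℂ β), ∀ i j, ∃ c : ℂ,
      H i *ᵥ (b j).ofLp = c • (b j).ofLp := by
  classical
  let T : ι → Module.End ℂ (EuclideanSpace ℂ β) := fun i => toEuclideanLin (H i)
  have hT : ∀ i, (T i).IsSymmetric := fun i => isSymmetric_toEuclideanLin_iff.mpr (hH i)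
  have hTcomm : Pairwise (Commute on T) := fun i j _ => by
    refine LinearMap.ext fun x => ?_
    simp [T, toLpLin_apply, (hcomm i j).eq]
  let E : (ι → ℂ) → Submodule ℂ (EuclideanSpace ℂ β) := fun μ =>
    ⨅ i, Module.End.eigenspace (T i) (μ i)
  have hE : DirectSum.IsInternal E :=
    LinearMap.IsSymmetric.directSum_isInternal_of_pairwise_commute hT hTcomm
  have hE' : DirectSum.IsInternal fun μ : {μ // E μ ≠ ⊥} => E μ :=
    DirectSum.isInternal_ne_bot_iff.mpr hE
  have horth := (LinearMap.IsSymmetric.orthogonalFamily_iInf_eigenspaces hT).comp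
    (γ := {μ // E μ ≠ ⊥}) Subtype.val_injective
  have : Fintype {μ // E μ ≠ ⊥} := hE.submodule_iSupIndep.fintypeNeBotOfFiniteDimensional
  have hrank : Module.finrank ℂ (EuclideanSpace ℂ β) = Fintype.card β := finrank_euclideanSpace
  refine ⟨(hE'.subordinateOrthonormalBasis hrank horth).reindex (Fintype.equivFin β).symm,
    fun i j => ⟨(hE'.subordinateOrthonormalBasisIndex hrank (Fintype.equivFin β j) horth).1 i, ?_⟩⟩
  have hmem := hE'.subordinateOrthonormalBasis_subordinate hrank (Fintype.equivFin β j) horth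
  have heigen := Module.End.mem_eigenspace_iff.mp ((Submodule.mem_iInf _).mp hmem i)
  simpa [T] using congrArg WithLp.ofLp heigen

open ComplexStarModule

lemma commute_realPart_and_imaginaryPart {B C : Matrix β β ℂ} (h : Commute B C)
    (hstar : Commute B (star C)) :
    Commute B (ℜ C : Matrix β β ℂ) ∧ Commute B (ℑ C : Matrix β β ℂ) := by
  rw [realPart_apply_coe, imaginaryPart_apply_coe]
  exact ⟨(h.add_right hstar).smul_right _, ((h.sub_right hstar).smul_right _).smul_right _⟩

lemma exists_orthonormal_mulVec_eq_smul [DecidableEq β] {ι : Type*} {A : ι → Matrix β β ℂ}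
    (hcomm : ∀ i j, Commute (A i) (A j))
    (hstar : ∀ i j, Commute (A i) (star (A j))) :
    ∃ v : β → β → ℂ, (∀ j j', star (v j) ⬝ᵥ v j' = if j = j' then 1 else 0) ∧
      ∀ i j, ∃ c : ℂ, A i *ᵥ v j = c • v j := by
  let H : ι ⊕ ι → selfAdjoint (Matrix β β ℂ) := Sum.elim (fun i => ℜ (A i)) (fun i => ℑ (A i))
  have hH : ∀ {B : Matrix β β ℂ}, (∀ i, Commute B (A i)) → (∀ i, Commute B (star (A i))) →
      ∀ k, Commute B (H k : Matrix β β ℂ) := fun h h' =>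
    Sum.rec (fun i => (commute_realPart_and_imaginaryPart (h i) (h' i)).1)
      (fun i => (commute_realPart_and_imaginaryPart (h i) (h' i)).2)
  have hAH : ∀ i k, Commute (A i) (H k : Matrix β β ℂ) := fun i => hH (hcomm i) (hstar i)
  have hHA : ∀ k i, Commute (H k : Matrix β β ℂ) (star (A i)) := fun k i => by
    simpa only [(H k).2.star_eq] using (hAH i k).star_star.symm
  obtain ⟨b, hb⟩ := exists_orthonormalBasis_mulVec_eq_smul (H := fun k => (H k : Matrix β β ℂ))
    (fun k => (H k).2) fun k => hH (fun i => (hAH i k).symm) (hHA k)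
  refine ⟨fun j => (b j).ofLp, fun j j' => ?_, fun i j => ?_⟩
  · rw [← orthonormal_iff_ite.mp b.orthonormal j j', dotProduct_comm]
    rfl
  · obtain ⟨x, hx⟩ := hb (Sum.inl i) j
    obtain ⟨y, hy⟩ := hb (Sum.inr i) j
    refine ⟨x + Complex.I * y, ?_⟩
    rw [← realPart_add_I_smul_imaginaryPart (A i), add_mulVec, smul_mulVec, add_smul, mul_smul]
    exact congrArg₂ (fun u w => u + Complex.I • w) hx hy

end CommonEigenbasis

section Compression

variable {α β : Type*} [Fintype β]

/-- The compression `(1 ⊗ ⟨v|) M (1 ⊗ |v⟩)` of `M` by a vector `v` of the second factor. -/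
def compress (v : β → ℂ) (M : Matrix (α × β) (α × β) ℂ) : Matrix α α ℂ :=
  Matrix.of fun a c => star v ⬝ᵥ (block M a c *ᵥ v)

lemma posSemidef_compress [Finite α] (v : β → ℂ) {M : Matrix (α × β) (α × β) ℂ}
    (hM : M.PosSemidef) : (compress v M).PosSemidef := by
  classical
  have := Fintype.ofFinite α
  let W : Matrix (α × β) α ℂ := Matrix.of fun x a => if x.1 = a then v x.2 else 0
  have hW : compress v M = Wᴴ * M * W := by
    ext a c
    rw [compress, of_apply, dotProduct_mulVec]
    simp [W, block, dotProduct, vecMul, Matrix.mul_apply, Fintype.sum_prod_type, apply_ite star]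
  rw [hW]
  exact hM.conjTranspose_mul_mul_same W

end Compression

section Classical

variable {α β : Type*} [Fintype β] [DecidableEq β] {v : β → β → ℂ}

lemma sum_vecMulVec_star_self (hv : ∀ j j', star (v j) ⬝ᵥ v j' = if j = j' then 1 else 0) :
    ∑ j, vecMulVec (v j) (star (v j)) = 1 := by
  let V : Matrix β β ℂ := Matrix.of fun i j => v j i
  have hV : Vᴴ * V = 1 := by
    ext i j
    rw [one_apply, ← hv i j]
    rfl
  rw [← mul_eq_one_comm.mp hV]
  ext i j
  simp [Matrix.sum_apply, vecMulVec_apply, Matrix.mul_apply, V]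

lemma eq_sum_compress_kronecker {M : Matrix (α × β) (α × β) ℂ}
    (hv : ∀ j j', star (v j) ⬝ᵥ v j' = if j = j' then 1 else 0)
    (hM : ∀ a c j, ∃ μ : ℂ, block M a c *ᵥ v j = μ • v j) :
    M = ∑ j, compress (v j) M ⊗ₖ vecMulVec (v j) (star (v j)) := by
  have hcompress : ∀ a c j, block M a c *ᵥ v j = compress (v j) M a c • v j := fun a c j => by
    obtain ⟨μ, hμ⟩ := hM a c j
    simp [compress, hμ, hv]
  refine block_ext fun a c => ?_
  calc block M a c = block M a c * ∑ j, vecMulVec (v j) (star (v j)) := by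
        rw [sum_vecMulVec_star_self hv, Matrix.mul_one]
    _ = ∑ j, compress (v j) M a c • vecMulVec (v j) (star (v j)) := by
        simp only [Finset.mul_sum, mul_vecMulVec, hcompress, smul_vecMulVec]
    _ = _ := by
        rw [block_sum]
        rfl

variable [Fintype α]

lemma exists_isDensityMatrix_eq_smul [Nonempty α] {T : Matrix α α ℂ} (hT : T.PosSemidef) :
    ∃ τ, IsDensityMatrix τ ∧ T = (T.trace.re : ℂ) • τ := by
  classical
  rcases eq_or_ne T.trace 0 with h | h
  · obtain ⟨a⟩ := ‹Nonempty α›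
    refine ⟨diagonal (Pi.single a 1), ⟨PosSemidef.diagonal ?_, ?_⟩, ?_⟩
    · exact Pi.single_nonneg.mpr zero_le_one
    · simp [trace_diagonal]
    · rw [hT.trace_eq_zero_iff.mp h, trace_zero, Complex.zero_re, Complex.ofReal_zero, zero_smul]
  · refine ⟨T.trace⁻¹ • T, ⟨hT.smul (inv_nonneg.mpr hT.trace_nonneg), ?_⟩, ?_⟩
    · rw [trace_smul, smul_eq_mul, inv_mul_cancel₀ h]
    · rw [ofReal_re_trace hT, smul_smul, mul_inv_cancel₀ h, one_smul]

lemma classicalOnB_of_eq_sum_kronecker [Nonempty α] {ρ : Matrix (α × β) (α × β) ℂ}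
    (htr : ρ.trace = 1) (hv : ∀ j j', star (v j) ⬝ᵥ v j' = if j = j' then 1 else 0)
    {T : β → Matrix α α ℂ} (hT : ∀ j, (T j).PosSemidef)
    (hρ : ρ = ∑ j, T j ⊗ₖ vecMulVec (v j) (star (v j))) : ClassicalOnB ρ := by
  choose τ hτ hTτ using fun j => exists_isDensityMatrix_eq_smul (hT j)
  refine ⟨fun j => (T j).trace.re, τ, v, fun j => (Complex.nonneg_iff.mp (hT j).trace_nonneg).1,
    ?_, hτ, hv, ?_⟩
  · have hsum : ∑ j, (T j).trace = 1 := by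
      rw [← htr, hρ, trace_sum]
      refine Finset.sum_congr rfl fun j _ => ?_
      rw [trace_kronecker, trace_vecMulVec, dotProduct_comm, hv, if_pos rfl, mul_one]
    rw [← Complex.re_sum, hsum, Complex.one_re]
  · simp only [← smul_kronecker, ← hTτ, ← hρ]

lemma classicalOnB_of_commute_block {ρ : Matrix (α × β) (α × β) ℂ} (hρ : IsDensityMatrix ρ)
    (hcomm : ∀ a c a' c', Commute (block ρ a c) (block ρ a' c')) : ClassicalOnB ρ := by
  have : Nonempty α := by
    by_contra h
    rw [not_nonempty_iff] at h
    simpa [Matrix.trace] using hρ.2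
  obtain ⟨v, hv, heigen⟩ := exists_orthonormal_mulVec_eq_smul
    (A := fun x : α × α => block ρ x.1 x.2) (fun x y => hcomm _ _ _ _) fun x y => by
      rw [star_eq_conjTranspose, ← block_conjTranspose, hρ.1.1.eq]
      exact hcomm _ _ _ _
  exact classicalOnB_of_eq_sum_kronecker hρ.2 hv (fun j => posSemidef_compress (v j) hρ.1)
    (eq_sum_compress_kronecker hv fun a c j => heigen (a, c) j)

end Classical

section Broadcast

variable {β : Type*}

/-- The Kraus operators `|vⱼ⟩|vⱼ⟩⟨vⱼ|` of the channel which measures in the basis `v` and broadcasts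
the outcome. -/
def broadcastKraus (v : β → β → ℂ) (j : β) : Matrix (β × β) β ℂ :=
  Matrix.of fun x b => v j x.1 * v j x.2 * star (v j b)

lemma krausFst_broadcastKraus (v : β → β → ℂ) (x : β × β) :
    krausFst (broadcastKraus v) x = v x.1 x.2 • vecMulVec (v x.1) (star (v x.1)) := by
  ext b b'
  simp [krausFst, broadcastKraus, vecMulVec_apply, mul_left_comm, mul_assoc]

lemma krausSnd_broadcastKraus (v : β → β → ℂ) :
    krausSnd (broadcastKraus v) = krausFst (broadcastKraus v) := by
  ext x b b'
  simp [krausSnd, krausFst, broadcastKraus, mul_comm]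

variable [Fintype β] [DecidableEq β] {v : β → β → ℂ}
  (hv : ∀ j j', star (v j) ⬝ᵥ v j' = if j = j' then 1 else 0)
include hv

lemma vecMulVec_star_mul_vecMulVec_star (i j : β) :
    vecMulVec (v i) (star (v i)) * vecMulVec (v j) (star (v j)) =
      if i = j then vecMulVec (v i) (star (v i)) else 0 := by
  rw [vecMulVec_mul_vecMulVec, hv]
  split_ifs with h <;> simp [h]

lemma sum_star_mul_self (j : β) : ∑ c, star (v j c) * v j c = 1 :=
  (hv j j).trans (if_pos rfl)

lemma sum_conjTranspose_broadcastKraus_mul_self :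
    ∑ j, (broadcastKraus v j)ᴴ * broadcastKraus v j = 1 := by
  rw [← sum_conjTranspose_krausFst_mul_self, ← sum_vecMulVec_star_self hv, Fintype.sum_prod_type]
  refine Finset.sum_congr rfl fun j _ => ?_
  simp only [krausFst_broadcastKraus, conjTranspose_smul, conjTranspose_vecMulVec, star_star,
    smul_mul_smul_comm, vecMulVec_star_mul_vecMulVec_star hv, if_pos, ← Finset.sum_smul,
    sum_star_mul_self hv, one_smul]

lemma krausMap_krausFst_broadcastKraus (j : β) :
    krausMap (krausFst (broadcastKraus v)) (vecMulVec (v j) (star (v j))) =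
      vecMulVec (v j) (star (v j)) := by
  rw [krausMap_apply, Fintype.sum_prod_type, Finset.sum_eq_single j]
  · simp only [krausFst_broadcastKraus, conjTranspose_smul, conjTranspose_vecMulVec, star_star,
      smul_mul_assoc, mul_smul_comm, smul_smul, vecMulVec_star_mul_vecMulVec_star hv, if_pos,
      ← Finset.sum_smul, sum_star_mul_self hv, one_smul]
  · intro i _ hij
    simp [krausFst_broadcastKraus, vecMulVec_star_mul_vecMulVec_star hv, hij]
  · simp

end Broadcast

lemma exists_broadcast_of_classicalOnB {α β : Type*} [Fintype α] [Fintype β] [DecidableEq β]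
    {ρ : Matrix (α × β) (α × β) ℂ} (hρ : ClassicalOnB ρ) :
    ∃ Γ : Matrix β β ℂ →ₗ[ℂ] Matrix (β × β) (β × β) ℂ, IsQuantumChannel Γ ∧
      ptraceThird (idTensor Γ ρ) = ρ ∧ ptraceSecond (idTensor Γ ρ) = ρ := by
  obtain ⟨p, τ, v, -, -, -, hv, rfl⟩ := hρ
  refine ⟨krausMap (broadcastKraus v),
    isQuantumChannel_krausMap (sum_conjTranspose_broadcastKraus_mul_self hv), ?_⟩
  rw [ptraceThird_idTensor_krausMap, ptraceSecond_idTensor_krausMap, krausSnd_broadcastKraus,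
    and_self]
  simp only [map_sum, map_smul, idTensor_kronecker, krausMap_krausFst_broadcastKraus hv]

/-- **No-unilocal-broadcasting of mutual information.** There is a channel
`Γ : B → B₁B₂` such that `ρ̃ = (id_A ⊗ Γ)[ρ_{AB}]` satisfies
`I(A:B₁) = I(A:B₂) = I(A:B)` if and only if `ρ_{AB}` is classical on `B`. -/
theorem no_unilocal_broadcasting_mutualInfo {α β : Type*} [Fintype α] [DecidableEq α]
    [Fintype β] [DecidableEq β]
    (ρ : Matrix (α × β) (α × β) ℂ) (hρ : IsDensityMatrix ρ) :
    (∃ Γ : Matrix β β ℂ →ₗ[ℂ] Matrix (β × β) (β × β) ℂ, IsQuantumChannel Γ ∧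
        mutualInfo (ptraceThird (idTensor Γ ρ)) = mutualInfo ρ ∧
        mutualInfo (ptraceSecond (idTensor Γ ρ)) = mutualInfo ρ) ↔
      ClassicalOnB ρ := by
  constructor
  · rintro ⟨Γ, hΓ, h₁, h₂⟩
    exact classicalOnB_of_commute_block hρ (commute_block_of_mutualInfo_eq hρ.1 hΓ h₁ h₂)
  · intro hclassical
    obtain ⟨Γ, hΓ, h₁, h₂⟩ := exists_broadcast_of_classicalOnB hclassical
    exact ⟨Γ, hΓ, congrArg mutualInfo h₁, congrArg mutualInfo h₂⟩
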